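/- arXiv:1712.01167 — 4 statements merged into one kernel-verified Lean document; each statement's English description precedes it below -/
import Mathlib

section
/- Let F be a nonzero homogeneous polynomial of degree 3 in k[x₀,x₁,x₂,x₃] such that the cubic surface V(F) is smooth, and let ℓ be a projective line contained in V(F). If char k ≠ 2, then ℓ contains at most 2 Eckardt points of V(F). If char k = 2, then the number of Eckardt points of V(F) lying on ℓ is exactly 0, 1, or 5. -/
open MvPolynomial Matrix

/-- The polynomial `F(A·x)`, obtained from `F` by substituting
`xᵢ ↦ ∑ⱼ Aᵢⱼ xⱼ`. -/
noncomputable def substMatrix {k : Type*} [Field k] (A : Matrix (Fin 4) (Fin 4) k)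
    (F : MvPolynomial (Fin 4) k) : MvPolynomial (Fin 4) k :=
  aeval (fun i => ∑ j, C (A i j) * X j) F

/-- A matrix `A` leaves the cubic surface `V(F)` invariant if `F(A·x) = λ·F(x)`
for some `λ ∈ kˣ`. -/
def LeavesInvariant {k : Type*} [Field k] (A : Matrix (Fin 4) (Fin 4) k)
    (F : MvPolynomial (Fin 4) k) : Prop :=
  ∃ lam : kˣ, substMatrix A F = (lam : k) • F

/-- `F` vanishes identically on the linear subspace `W ⊆ k⁴`. -/
def VanishesOn {k : Type*} [Field k] (F : MvPolynomial (Fin 4) k)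
    (W : Submodule k (Fin 4 → k)) : Prop :=
  ∀ x ∈ W, eval x F = 0

/-- `W` is (the cone over) a projective line contained in the surface `V(F)`. -/
def IsLineIn {k : Type*} [Field k] (F : MvPolynomial (Fin 4) k)
    (W : Submodule k (Fin 4 → k)) : Prop :=
  Module.finrank k W = 2 ∧ VanishesOn F W

/-- `L`, a 1-dimensional subspace of `k⁴` regarded as a point of `ℙ³(k)`, is an
Eckardt point of `V(F)`: at least three distinct projective lines contained in
`V(F)` pass through it. -/
def IsEckardtPoint {k : Type*} [Field k] (F : MvPolynomial (Fin 4) k)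
    (L : Submodule k (Fin 4 → k)) : Prop :=
  Module.finrank k L = 1 ∧
    ∃ W₁ W₂ W₃ : Submodule k (Fin 4 → k),
      W₁ ≠ W₂ ∧ W₁ ≠ W₃ ∧ W₂ ≠ W₃ ∧
      IsLineIn F W₁ ∧ IsLineIn F W₂ ∧ IsLineIn F W₃ ∧
      L ≤ W₁ ∧ L ≤ W₂ ∧ L ≤ W₃

/-!
Let `ℓ` be a line on the smooth cubic surface. Sending a point of `ℓ` to the tangent plane of the
surface there, one of the planes through `ℓ`, gives the Gauss map of `ℓ`. It is defined by a pair of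
binary quadratic forms without common zero. At an Eckardt point `p ∈ ℓ` the tangent plane meets the
surface in three lines through `p`. The plane cubic has a triple point there, so all second
derivatives of the equation along the tangent plane vanish at `p`, and `p` is a ramification point
of the Gauss map.

If `char k ≠ 2`, a map `ℙ¹ → ℙ¹` of degree two has at most two ramification points. If `char k = 2`,
two ramification points make the Gauss map purely inseparable: it is
`x p + y q ↦ x² C'(p) + y² C'(q)` in terms of the differential `C'` of the equation. Hence
`x² m + y² n` is tangent at `x p + y q` for suitable `m`, `n`, and the Eckardt points of `ℓ` become
the zeros of the binary quintic form `C'(x² m + y² n)(x p + y q)`. Its zeros are simple because the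
lines meeting at an Eckardt point are distinct, so there are five of them.
-/

lemma two_lt_encard_iff {α : Type*} {s : Set α} :
    2 < s.encard ↔ ∃ a b c, a ∈ s ∧ b ∈ s ∧ c ∈ s ∧ a ≠ b ∧ a ≠ c ∧ b ≠ c := by
  constructor
  · intro h
    obtain ⟨t, hts, ht⟩ := Set.exists_subset_encard_eq (Order.add_one_le_of_lt h)
    obtain ⟨a, b, c, hab, hac, hbc, rfl⟩ := Set.encard_eq_three.1 ht
    exact ⟨a, b, c, hts (by simp), hts (by simp), hts (by simp), hab, hac, hbc⟩
  · rintro ⟨a, b, c, ha, hb, hc, hab, hac, hbc⟩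
    have hsub : ({a, b, c} : Set α) ⊆ s := by
      simp [Set.insert_subset_iff, ha, hb, hc]
    refine lt_of_lt_of_le ?_ (Set.encard_le_encard hsub)
    rw [Set.encard_eq_three.2 ⟨a, b, c, hab, hac, hbc, rfl⟩]
    decide

section Polynomial

variable {k : Type*} [Field k] [IsAlgClosed k] {P : Polynomial k}

lemma separable_of_forall_isRoot (h : ∀ x, P.IsRoot x → ¬ P.derivative.IsRoot x) :
    P.Separable := by
  refine (Polynomial.isCoprime_iff_aeval_ne_zero_of_isAlgClosed k k _ _).2 fun x => ?_
  simpa only [Polynomial.coe_aeval_eq_eval, Polynomial.IsRoot, imp_iff_not_or] using h x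

lemma encard_setOf_isRoot_eq_natDegree (hP : P.Separable) :
    {x | P.IsRoot x}.encard = P.natDegree := by
  have hroots : {x | P.IsRoot x} = P.rootSet k := by
    ext x
    simp [Polynomial.mem_rootSet, hP.ne_zero]
  rw [hroots, ← Polynomial.card_rootSet_eq_natDegree (K := k) hP (IsAlgClosed.splits _),
    Set.encard_eq_coe_toFinset_card, Set.toFinset_card]

end Polynomial

section LinearAlgebra

variable {k V : Type*} [Field k] [AddCommGroup V] [Module k V]

lemma finrank_span_pair_eq_two {x y : V} (h : LinearIndependent k ![x, y]) :
    Module.finrank k (Submodule.span k {x, y}) = 2 := by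
  rw [← Matrix.range_cons_cons_empty x y ![], finrank_span_eq_card h, Fintype.card_fin]

lemma span_pair_eq_of_finrank_eq_two {U : Submodule k V} (hU : Module.finrank k U = 2) {x y : V}
    (hx : x ∈ U) (hy : y ∈ U) (h : LinearIndependent k ![x, y]) :
    Submodule.span k {x, y} = U := by
  have : Module.Finite k U := Module.finite_of_finrank_eq_succ hU
  refine Submodule.eq_of_le_of_finrank_le (Submodule.span_le.2 (Set.pair_subset hx hy)) ?_
  rw [hU, finrank_span_pair_eq_two h]

lemma exists_mem_linearIndependent_pair {U : Submodule k V} (hU : 1 < Module.finrank k U) {x : V}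
    (hx : x ∈ U) (hx0 : x ≠ 0) : ∃ y ∈ U, LinearIndependent k ![x, y] := by
  obtain ⟨y, hxy⟩ := exists_linearIndependent_pair_of_one_lt_finrank hU
    (x := (⟨x, hx⟩ : U)) (by simpa using hx0)
  refine ⟨y, y.2, LinearIndependent.pair_iff.2 fun s t hst => ?_⟩
  exact LinearIndependent.pair_iff.1 hxy s t (Subtype.ext hst)

lemma linearIndependent_pair_of_mem_of_notMem {U : Submodule k V} {x y : V} (hx : x ∈ U)
    (hx0 : x ≠ 0) (hy : y ∉ U) : LinearIndependent k ![x, y] :=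
  (LinearIndependent.pair_iff' hx0).2 fun c hc => hy (hc ▸ U.smul_mem c hx)

lemma linearIndependent_pair_of_span_singleton_ne {x y : V} (hx : x ≠ 0) (hy : y ≠ 0)
    (h : Submodule.span k {x} ≠ Submodule.span k {y}) : LinearIndependent k ![x, y] := by
  refine (LinearIndependent.pair_iff' hx).2 ?_
  rintro c rfl
  exact h (Submodule.span_singleton_smul_eq (IsUnit.mk0 c (left_ne_zero_of_smul hy)) x).symm

lemma injective_span_singleton_smul_add {x y : V} (h : LinearIndependent k ![x, y]) :
    Function.Injective fun r : k => Submodule.span k {r • x + y} := by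
  intro r s (hrs : Submodule.span k {r • x + y} = Submodule.span k {s • x + y})
  by_contra hne
  have hli : LinearIndependent k ![r • x + (1 : k) • y, s • x + (1 : k) • y] :=
    (LinearIndependent.pair_add_smul_add_smul_iff r 1 s 1).2 ⟨h, by simpa using hne⟩
  simp only [one_smul] at hli
  have hmem : s • x + y ∈ Submodule.span k {r • x + y} :=
    hrs.symm ▸ Submodule.mem_span_singleton_self _
  obtain ⟨c, hc⟩ := Submodule.mem_span_singleton.1 hmem
  exact (LinearIndependent.pair_iff' (hli.ne_zero 0)).1 hli c hc

lemma span_singleton_eq_or_exists_of_mem_span_pair {x y z : V} (hz : z ∈ Submodule.span k {x, y})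
    (hz0 : z ≠ 0) : Submodule.span k {z} = Submodule.span k {x} ∨
      ∃ r : k, Submodule.span k {z} = Submodule.span k {r • x + y} := by
  obtain ⟨s, t, rfl⟩ := Submodule.mem_span_pair.1 hz
  by_cases ht : t = 0
  · subst ht
    simp only [zero_smul, add_zero] at hz0 ⊢
    exact .inl (Submodule.span_singleton_smul_eq (IsUnit.mk0 s (left_ne_zero_of_smul hz0)) x)
  · refine .inr ⟨t⁻¹ * s, ?_⟩
    rw [← Submodule.span_singleton_smul_eq (IsUnit.mk0 t ht) ((t⁻¹ * s) • x + y), smul_add,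
      smul_smul, mul_inv_cancel_left₀ ht]

lemma sup_span_singleton_sup_span_singleton_eq_top [FiniteDimensional k V] {U : Submodule k V}
    (hU : Module.finrank k U + 2 = Module.finrank k V) {x y : V} (hx : x ∉ U)
    (hy : y ∉ U ⊔ Submodule.span k {x}) :
    U ⊔ Submodule.span k {x} ⊔ Submodule.span k {y} = ⊤ := by
  apply Submodule.eq_top_of_finrank_eq
  rw [Submodule.finrank_sup_span_singleton hy, Submodule.finrank_sup_span_singleton hx, ← hU]

lemma exists_notMem_of_finrank_lt {U : Submodule k V}
    (hU : Module.finrank k U < Module.finrank k V) : ∃ x, x ∉ U := by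
  by_contra! h
  rw [(Submodule.eq_top_iff'.2 h : U = ⊤), finrank_top] at hU
  exact hU.false

lemma eq_zero_of_sup_span_singleton_eq_top {M : Type*} [AddCommGroup M] [Module k M]
    {U : Submodule k V} {x y : V}
    (hU : U ⊔ Submodule.span k {x} ⊔ Submodule.span k {y} = ⊤) {φ : V →ₗ[k] M}
    (hφ : ∀ u ∈ U, φ u = 0) (hx : φ x = 0) (hy : φ y = 0) : φ = 0 := by
  rw [← LinearMap.ker_eq_top, ← top_le_iff, ← hU]
  refine sup_le (sup_le hφ ?_) ?_ <;> simpa [Submodule.span_singleton_le_iff_mem]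

lemma exists_notMem_apply_eq_zero [FiniteDimensional k V] {U : Submodule k V}
    (hU : Module.finrank k U + 1 < Module.finrank k V) (φ : Module.Dual k V) :
    ∃ x ∉ U, φ x = 0 := by
  by_contra! h
  have hle : LinearMap.ker φ ≤ U := fun x hx => by_contra fun hxU => h x hxU hx
  have hker := Submodule.finrank_mono hle
  have hrange := (LinearMap.range φ).finrank_le
  have hsum := φ.finrank_range_add_finrank_ker
  rw [Module.finrank_self] at hrange
  omega

lemma exists_quadratic_root [IsAlgClosed k] {a : k} (ha : a ≠ 0) (b c : k) :
    ∃ r, a * r ^ 2 + b * r + c = 0 := by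
  obtain ⟨r, hr⟩ := IsAlgClosed.exists_root
    (Polynomial.C a * Polynomial.X ^ 2 + Polynomial.C b * Polynomial.X + Polynomial.C c)
    (by rw [Polynomial.degree_quadratic ha]; decide)
  exact ⟨r, by simpa using hr⟩

lemma exists_ne_zero_quadraticForm_eq_zero [IsAlgClosed k] (hV : 1 < Module.finrank k V)
    (Q : QuadraticForm k V) : ∃ x ≠ 0, Q x = 0 := by
  have : Nontrivial V := Module.nontrivial_of_finrank_pos (zero_lt_one.trans hV)
  obtain ⟨x, hx⟩ := exists_ne (0 : V)
  by_cases hQ : Q x = 0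
  · exact ⟨x, hx, hQ⟩
  obtain ⟨y, hxy⟩ := exists_linearIndependent_pair_of_one_lt_finrank hV hx
  obtain ⟨r, hr⟩ := exists_quadratic_root hQ (QuadraticMap.polar Q x y) (Q y)
  refine ⟨r • x + y, ((LinearIndependent.pair_add_smul_right_iff r).2 hxy).ne_zero 1, ?_⟩
  rw [QuadraticMap.map_add Q, QuadraticMap.map_smul, QuadraticMap.polar_smul_left, smul_eq_mul,
    smul_eq_mul]
  linear_combination hr

end LinearAlgebra

/-- Trilinear forms on `V`. A cubic form is represented by a trilinear form `C`, not assumed to be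
symmetric, through its restriction `C x x x` to the diagonal; unlike a symmetric form, such a `C`
exists in every characteristic. -/
abbrev TrilinForm (k V : Type*) [CommRing k] [AddCommGroup V] [Module k V] : Type _ :=
  V →ₗ[k] V →ₗ[k] V →ₗ[k] k

namespace TrilinForm

section CubicForm

variable {k V : Type*} [CommRing k] [AddCommGroup V] [Module k V]

/-- The cubic form represented by `C`. -/
def cubic (C : TrilinForm k V) (x : V) : k := C x x x

/-- The derivative of the cubic form of `C`, as a quadratic map: `C.deriv x` is the differential
at the point `x`. -/
def deriv (C : TrilinForm k V) : QuadraticMap k V (Module.Dual k V) :=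
  LinearMap.BilinMap.toQuadraticMap (C + LinearMap.lflip.toLinearMap ∘ₗ (C + C.flip))

/-- The full polarization of the cubic form of `C`: the symmetric trilinear form of its second
derivatives. -/
def polar (C : TrilinForm k V) : TrilinForm k V := C.deriv.polarBilin

variable (C : TrilinForm k V)

lemma deriv_apply (x v : V) : C.deriv x v = C v x x + C x v x + C x x v := by
  simp only [deriv, LinearMap.BilinMap.toQuadraticMap_add, _root_.add_apply,
    LinearMap.BilinMap.toQuadraticMap_apply, LinearMap.coe_comp, LinearEquiv.coe_coe,
    Function.comp_apply, LinearMap.add_apply, LinearMap.lflip_apply, LinearMap.flip_apply]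
  ring

lemma cubic_add (x y : V) :
    C.cubic (x + y) = C.cubic x + C.deriv x y + C.deriv y x + C.cubic y := by
  simp only [cubic, deriv_apply, map_add, LinearMap.add_apply]; ring

lemma cubic_smul (c : k) (x : V) : C.cubic (c • x) = c ^ 3 * C.cubic x := by
  simp only [cubic, map_smul, LinearMap.smul_apply, smul_eq_mul]; ring

lemma deriv_add (x y : V) : C.deriv (x + y) = C.deriv x + C.deriv y + C.polar x y :=
  QuadraticMap.map_add C.deriv x y

lemma deriv_smul (c : k) (x : V) : C.deriv (c • x) = c ^ 2 • C.deriv x := by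
  rw [QuadraticMap.map_smul, sq]

lemma polar_self (x : V) : C.polar x x = (2 : k) • C.deriv x := by
  rw [polar, QuadraticMap.polarBilin_apply_apply, QuadraticMap.polar_self, two_smul, two_smul]

lemma polar_comm (x y : V) : C.polar x y = C.polar y x :=
  QuadraticMap.polar_comm C.deriv x y

lemma polar_right_comm (x y z : V) : C.polar x y z = C.polar x z y := by
  simp only [polar, QuadraticMap.polarBilin_apply_apply, QuadraticMap.polar, LinearMap.sub_apply,
    deriv_apply, map_add, LinearMap.add_apply]
  ring

lemma polar_rotate (x y z : V) : C.polar x y z = C.polar y z x := by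
  rw [polar_comm, polar_right_comm]

lemma polar_apply_smul_add_smul_self (s t : k) (x y : V) :
    C.polar x (s • x + t • y) = (2 * s) • C.deriv x + t • C.polar x y := by
  rw [map_add, map_smul, map_smul, polar_self, smul_smul, mul_comm]

lemma deriv_smul_add_smul (s t : k) (x y : V) :
    C.deriv (s • x + t • y) =
      s ^ 2 • C.deriv x + t ^ 2 • C.deriv y + (s * t) • C.polar x y := by
  simp only [deriv_add, deriv_smul, map_smul, LinearMap.smul_apply, smul_smul, mul_comm]

end CubicForm

section MvPolynomial

variable {k σ : Type*} [CommRing k] [DecidableEq σ]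

/-- The trilinear form `C` on `σ → k` represents the polynomial `F` together with its partial
derivatives. -/
structure Represents (C : TrilinForm k (σ → k)) (F : MvPolynomial σ k) : Prop where
  eval_eq : ∀ x, eval x F = C.cubic x
  eval_pderiv_eq : ∀ x i, eval x (pderiv i F) = C.deriv x (Pi.single i 1)

lemma represents_zero : Represents 0 (0 : MvPolynomial σ k) :=
  ⟨by simp [cubic], by simp [deriv_apply]⟩

variable {C C' : TrilinForm k (σ → k)} {F F' : MvPolynomial σ k}

lemma Represents.add (h : C.Represents F) (h' : C'.Represents F') :
    (C + C').Represents (F + F') where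
  eval_eq x := by rw [map_add, h.eval_eq, h'.eval_eq]; rfl
  eval_pderiv_eq x i := by
    rw [map_add, map_add, h.eval_pderiv_eq, h'.eval_pderiv_eq]
    simp only [deriv_apply, LinearMap.add_apply]
    ring

lemma Represents.smul (h : C.Represents F) (a : k) : (a • C).Represents (a • F) where
  eval_eq x := by rw [smul_eval, h.eval_eq]; rfl
  eval_pderiv_eq x i := by
    rw [Derivation.map_smul, smul_eval, h.eval_pderiv_eq]
    simp only [deriv_apply, LinearMap.smul_apply, smul_eq_mul]
    ring

lemma represents_X_mul_X_mul_X (i j l : σ) :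
    Represents ((LinearMap.proj i : Module.Dual k (σ → k)).smulRight
        ((LinearMap.proj j : Module.Dual k (σ → k)).smulRight
          (LinearMap.proj l : Module.Dual k (σ → k))))
      (X i * (X j * X l)) where
  eval_eq x := by simp [cubic]
  eval_pderiv_eq x m := by
    simp only [deriv_apply, Derivation.leibniz, pderiv_X, smul_eq_mul, map_add, map_mul, eval_X,
      LinearMap.smulRight_apply, LinearMap.smul_apply, LinearMap.proj_apply, Pi.single_apply,
      apply_ite (eval x), map_one, map_zero]
    ring

open scoped Pointwise in
theorem exists_represents (hF : F.IsHomogeneous 3) :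
    ∃ C : TrilinForm k (σ → k), C.Represents F := by
  rw [← mem_homogeneousSubmodule, ← homogeneousSubmodule_one_pow,
    homogeneousSubmodule_one_eq_span_X, Submodule.span_pow, pow_three] at hF
  induction hF using Submodule.span_induction with
  | mem F hF =>
    obtain ⟨_, ⟨i, rfl⟩, _, ⟨_, ⟨j, rfl⟩, _, ⟨l, rfl⟩, rfl⟩, rfl⟩ := hF
    exact ⟨_, represents_X_mul_X_mul_X i j l⟩
  | zero => exact ⟨0, represents_zero⟩
  | add F G _ _ hF hG =>
    obtain ⟨C, hC⟩ := hF
    obtain ⟨C', hC'⟩ := hG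
    exact ⟨C + C', hC.add hC'⟩
  | smul a F _ hF =>
    obtain ⟨C, hC⟩ := hF
    exact ⟨a • C, hC.smul a⟩

end MvPolynomial

section Lines

variable {k V : Type*} [Field k] [AddCommGroup V] [Module k V] {C : TrilinForm k V}
  {U W : Submodule k V} {p q n : V}

/-- The lines contained in the projective surface `V(C.cubic)`, each given by the
two-dimensional subspace that is the cone over it. -/
def lines (C : TrilinForm k V) : Set (Submodule k V) :=
  {U | Module.finrank k U = 2 ∧ ∀ x ∈ U, C.cubic x = 0}

/-- The lines contained in the surface `V(C.cubic)` that pass through the point spanned by `p`. -/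
def linesThrough (C : TrilinForm k V) (p : V) : Set (Submodule k V) :=
  {U ∈ C.lines | p ∈ U}

/-- The surface `V(C.cubic)` is smooth: the cubic form and its differential have no common zero
but the origin. -/
def Smooth (C : TrilinForm k V) : Prop :=
  ∀ x, C.cubic x = 0 → C.deriv x = 0 → x = 0

/-- The vector `p` spans an Eckardt point: at least three lines of the surface pass through it.
Only nonzero `p` are meaningful. -/
def IsEckardt (C : TrilinForm k V) (p : V) : Prop :=
  2 < (C.linesThrough p).encard

lemma cubic_apply_eq_zero_of_mem (hU : U ∈ C.lines) {x : V} (hx : x ∈ U) : C.cubic x = 0 :=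
  hU.2 x hx

lemma deriv_apply_eq_zero_of_mem [Infinite k] (hU : U ∈ C.lines) {x y : V} (hx : x ∈ U)
    (hy : y ∈ U) : C.deriv x y = 0 := by
  have hadd (t : k) (ht : t ≠ 0) : C.deriv x y + t * C.deriv y x = 0 := by
    have h := cubic_apply_eq_zero_of_mem hU (U.add_mem hx (U.smul_mem t hy))
    rw [cubic_add, cubic_apply_eq_zero_of_mem hU hx,
      cubic_apply_eq_zero_of_mem hU (U.smul_mem t hy), deriv_smul, map_smul,
      LinearMap.smul_apply, smul_eq_mul, smul_eq_mul] at h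
    exact (mul_eq_zero.1 (by linear_combination h : t * _ = 0)).resolve_left ht
  obtain ⟨t, ht⟩ := (Set.toFinite {(0 : k), 1}).exists_notMem
  simp only [Set.mem_insert_iff, Set.mem_singleton_iff, not_or] at ht
  have h0 : (t - 1) * C.deriv y x = 0 := by
    linear_combination hadd t ht.1 - hadd 1 one_ne_zero
  have := (mul_eq_zero.1 h0).resolve_left (sub_ne_zero.2 ht.2)
  simpa [this] using hadd 1 one_ne_zero

lemma polar_apply_eq_zero_of_mem [Infinite k] (hU : U ∈ C.lines) {x y z : V} (hx : x ∈ U)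
    (hy : y ∈ U) (hz : z ∈ U) : C.polar x y z = 0 := by
  have h := deriv_apply_eq_zero_of_mem hU (U.add_mem hx hy) hz
  simpa only [deriv_add, LinearMap.add_apply, deriv_apply_eq_zero_of_mem hU hx hz,
    deriv_apply_eq_zero_of_mem hU hy hz, zero_add] using h

lemma span_pair_mem_lines (h : LinearIndependent k ![p, q]) (hp : C.cubic p = 0)
    (hq : C.cubic q = 0) (hpq : C.deriv p q = 0) (hqp : C.deriv q p = 0) :
    Submodule.span k {p, q} ∈ C.lines := by
  refine ⟨finrank_span_pair_eq_two h, fun x hx => ?_⟩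
  obtain ⟨s, t, rfl⟩ := Submodule.mem_span_pair.1 hx
  simp [cubic_add, cubic_smul, deriv_smul, hp, hq, hpq, hqp]

lemma isEckardt_congr (h : Submodule.span k {p} = Submodule.span k {q}) :
    C.IsEckardt p ↔ C.IsEckardt q := by
  simp only [IsEckardt, linesThrough, ← Submodule.span_singleton_le_iff_mem, h]

lemma Smooth.deriv_ne_zero (hC : C.Smooth) (hW : W ∈ C.lines) (hp : p ∈ W) (hp0 : p ≠ 0) :
    C.deriv p ≠ 0 :=
  fun h => hp0 (hC p (cubic_apply_eq_zero_of_mem hW hp) h)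

variable [IsAlgClosed k]

-- Otherwise a zero `x` of the binary quadratic form `x ↦ C.deriv x v` on `U`, for `v` completing
-- `U` and `n` to a spanning set, would be a singular point.
theorem Smooth.exists_deriv_apply_ne_zero (hC : C.Smooth) (hV : Module.finrank k V = 4)
    (hU : U ∈ C.lines) (hn : n ∉ U) : ∃ x ∈ U, C.deriv x n ≠ 0 := by
  have : FiniteDimensional k V := Module.finite_of_finrank_eq_succ hV
  by_contra! hzero
  obtain ⟨v, hv⟩ := exists_notMem_of_finrank_lt (U := U ⊔ Submodule.span k {n}) (by
    rw [Submodule.finrank_sup_span_singleton hn, hU.1, hV]; norm_num)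
  have htop := sup_span_singleton_sup_span_singleton_eq_top (by rw [hU.1, hV]) hn hv
  obtain ⟨x, hx0, hx⟩ := exists_ne_zero_quadraticForm_eq_zero (by rw [hU.1]; norm_num)
    (((LinearMap.applyₗ v).compQuadraticMap C.deriv).comp U.subtype)
  refine hC.deriv_ne_zero hU x.2 (by simpa using hx0) ?_
  exact eq_zero_of_sup_span_singleton_eq_top htop
    (fun u hu => deriv_apply_eq_zero_of_mem hU x.2 hu) (hzero x x.2) hx

end Lines

section TangentFrame

variable {k V : Type*} [Field k] [AddCommGroup V] [Module k V]

/-- A frame adapted to a point of a line of the surface: `p` and `q` span the line `W`, and `n`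
completes them to a basis of the tangent space `ker (C.deriv p)` of the surface at `p`. -/
structure IsTangentFrame (C : TrilinForm k V) (W : Submodule k V) (p q n : V) : Prop where
  mem_lines : W ∈ C.lines
  left_mem : p ∈ W
  right_mem : q ∈ W
  linearIndependent : LinearIndependent k ![p, q]
  notMem : n ∉ W
  deriv_apply_eq_zero : C.deriv p n = 0

namespace IsTangentFrame

variable {C : TrilinForm k V} {U W : Submodule k V} {p q n : V}

lemma left_ne_zero (h : C.IsTangentFrame W p q n) : p ≠ 0 :=
  h.linearIndependent.ne_zero 0

lemma span_pair_eq (h : C.IsTangentFrame W p q n) : Submodule.span k {p, q} = W :=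
  span_pair_eq_of_finrank_eq_two h.mem_lines.1 h.left_mem h.right_mem h.linearIndependent

lemma smul (h : C.IsTangentFrame W p q n) {c : k} (hc : c ≠ 0) :
    C.IsTangentFrame W p q (c • n) :=
  { h with
    notMem := fun hn => h.notMem ((W.smul_mem_iff hc).1 hn)
    deriv_apply_eq_zero := by rw [map_smul, h.deriv_apply_eq_zero, smul_zero] }

lemma add_smul_notMem (h : C.IsTangentFrame W p q n) (r : k) : n + r • q ∉ W :=
  fun hn => h.notMem ((W.add_mem_iff_left (W.smul_mem r h.right_mem)).1 hn)

lemma linearIndependent_add_smul (h : C.IsTangentFrame W p q n) (r : k) :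
    LinearIndependent k ![p, n + r • q] :=
  linearIndependent_pair_of_mem_of_notMem h.left_mem h.left_ne_zero (h.add_smul_notMem r)

lemma span_add_smul_ne (h : C.IsTangentFrame W p q n) (r : k) :
    Submodule.span k {p, n + r • q} ≠ W :=
  fun hW => h.add_smul_notMem r (hW ▸ Submodule.subset_span (by simp))

lemma span_add_smul_eq (h : C.IsTangentFrame W p q n) (hU : Module.finrank k U = 2) (hp : p ∈ U)
    {r : k} (hr : n + r • q ∈ U) : Submodule.span k {p, n + r • q} = U :=
  span_pair_eq_of_finrank_eq_two hU hp hr (h.linearIndependent_add_smul r)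

lemma injective_span_add_smul (h : C.IsTangentFrame W p q n) :
    Function.Injective fun r : k => Submodule.span k {p, n + r • q} := by
  intro r s (hrs : Submodule.span k {p, n + r • q} = Submodule.span k {p, n + s • q})
  by_contra hne
  have hr : n + r • q ∈ Submodule.span k {p, n + r • q} := Submodule.subset_span (by simp)
  have hs : n + s • q ∈ Submodule.span k {p, n + r • q} := hrs ▸ Submodule.subset_span (by simp)
  have hq : q ∈ Submodule.span k {p, n + r • q} := by
    rw [← Submodule.smul_mem_iff _ (sub_ne_zero.2 hne), sub_smul, ← add_sub_add_left_eq_sub _ _ n]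
    exact Submodule.sub_mem _ hr hs
  refine h.span_add_smul_ne r ?_
  rw [← h.span_pair_eq]
  exact (span_pair_eq_of_finrank_eq_two (finrank_span_pair_eq_two (h.linearIndependent_add_smul r))
    (Submodule.subset_span (by simp)) hq h.linearIndependent).symm

lemma cubic_add_smul (h : C.IsTangentFrame W p q n) (r : k) :
    C.cubic (n + r • q) = C.deriv q n * r ^ 2 + C.deriv n q * r + C.cubic n := by
  rw [cubic_add, cubic_smul, deriv_smul, map_smul, LinearMap.smul_apply,
    cubic_apply_eq_zero_of_mem h.mem_lines h.right_mem, smul_eq_mul, smul_eq_mul]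
  ring

end IsTangentFrame

lemma exists_isTangentFrame {C : TrilinForm k V} {W : Submodule k V} {p q : V}
    (hV : Module.finrank k V = 4) (hW : W ∈ C.lines)
    (hp : p ∈ W) (hq : q ∈ W) (hpq : LinearIndependent k ![p, q]) :
    ∃ n, C.IsTangentFrame W p q n := by
  have : FiniteDimensional k V := Module.finite_of_finrank_eq_succ hV
  obtain ⟨n, hn, hpn⟩ := exists_notMem_apply_eq_zero (U := W) (by rw [hW.1, hV]; norm_num)
    (C.deriv p)
  exact ⟨n, hW, hp, hq, hpq, hn, hpn⟩

namespace IsTangentFrame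

variable {C : TrilinForm k V} {U W : Submodule k V} {p q n : V}

section Infinite

variable [Infinite k]

lemma deriv_add_smul_apply_left (h : C.IsTangentFrame W p q n) (r : k) :
    C.deriv (n + r • q) p = C.polar p q n * r + C.deriv n p := by
  rw [deriv_add, deriv_smul, map_smul, polar_rotate C p q n, polar_comm C q n]
  simp only [LinearMap.add_apply, LinearMap.smul_apply, smul_eq_mul,
    deriv_apply_eq_zero_of_mem h.mem_lines h.right_mem h.left_mem]
  ring

lemma ker_deriv_eq (h : C.IsTangentFrame W p q n) (hC : C.Smooth) (hV : Module.finrank k V = 4) :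
    LinearMap.ker (C.deriv p) = W ⊔ Submodule.span k {n} := by
  have : FiniteDimensional k V := Module.finite_of_finrank_eq_succ hV
  have hker := Module.Dual.finrank_ker_add_one_of_ne_zero
    (hC.deriv_ne_zero h.mem_lines h.left_mem h.left_ne_zero)
  refine (Submodule.eq_of_le_of_finrank_le (sup_le ?_ ?_) ?_).symm
  · exact fun w hw => deriv_apply_eq_zero_of_mem h.mem_lines h.left_mem hw
  · simpa [Submodule.span_singleton_le_iff_mem] using h.deriv_apply_eq_zero
  · rw [Submodule.finrank_sup_span_singleton h.notMem, h.mem_lines.1]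
    omega

-- A line `U ≠ W` through `p` lies in the tangent space at `p`, hence meets `n + W`.
lemma exists_add_smul_mem (h : C.IsTangentFrame W p q n) (hC : C.Smooth)
    (hV : Module.finrank k V = 4) (hU : U ∈ C.linesThrough p) (hUW : U ≠ W) :
    ∃ r : k, n + r • q ∈ U := by
  obtain ⟨u, hu, hpu⟩ := exists_mem_linearIndependent_pair (by rw [hU.1.1]; norm_num) hU.2
    h.left_ne_zero
  have hker : u ∈ LinearMap.ker (C.deriv p) := deriv_apply_eq_zero_of_mem hU.1 hU.2 hu
  rw [h.ker_deriv_eq hC hV] at hker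
  obtain ⟨w, hw, _, ha, rfl⟩ := Submodule.mem_sup.1 hker
  obtain ⟨a, rfl⟩ := Submodule.mem_span_singleton.1 ha
  rw [← h.span_pair_eq] at hw
  obtain ⟨s, r, rfl⟩ := Submodule.mem_span_pair.1 hw
  have ha0 : a ≠ 0 := by
    rintro rfl
    rw [zero_smul, add_zero] at hu hpu
    rw [h.span_pair_eq] at hw
    exact hUW ((span_pair_eq_of_finrank_eq_two hU.1.1 hU.2 hu hpu).symm.trans
      (span_pair_eq_of_finrank_eq_two h.mem_lines.1 h.left_mem hw hpu))
  refine ⟨a⁻¹ * r, (U.smul_mem_iff ha0).1 ?_⟩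
  rw [smul_add, smul_smul, mul_inv_cancel_left₀ ha0]
  have := U.sub_mem hu (U.smul_mem s hU.2)
  convert this using 1
  module

theorem linesThrough_sdiff_singleton (h : C.IsTangentFrame W p q n) (hC : C.Smooth)
    (hV : Module.finrank k V = 4) :
    C.linesThrough p \ {W} = (fun r : k => Submodule.span k {p, n + r • q}) ''
      {r | C.deriv q n * r ^ 2 + C.deriv n q * r + C.cubic n = 0 ∧
        C.polar p q n * r + C.deriv n p = 0} := by
  ext U
  constructor
  · rintro ⟨hU, hUW⟩
    obtain ⟨r, hr⟩ := h.exists_add_smul_mem hC hV hU hUW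
    refine ⟨r, ⟨?_, ?_⟩, h.span_add_smul_eq hU.1.1 hU.2 hr⟩
    · rw [← h.cubic_add_smul, cubic_apply_eq_zero_of_mem hU.1 hr]
    · rw [← h.deriv_add_smul_apply_left, deriv_apply_eq_zero_of_mem hU.1 hr hU.2]
  · rintro ⟨r, ⟨hr, hr'⟩, rfl⟩
    rw [← h.cubic_add_smul] at hr
    rw [← h.deriv_add_smul_apply_left] at hr'
    refine ⟨⟨span_pair_mem_lines (h.linearIndependent_add_smul r)
      (cubic_apply_eq_zero_of_mem h.mem_lines h.left_mem) hr ?_ hr',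
      Submodule.subset_span (by simp)⟩, h.span_add_smul_ne r⟩
    rw [map_add, map_smul, h.deriv_apply_eq_zero,
      deriv_apply_eq_zero_of_mem h.mem_lines h.left_mem h.right_mem, smul_zero, add_zero]

end Infinite

variable [IsAlgClosed k]

lemma deriv_right_apply_ne_zero (h : C.IsTangentFrame W p q n) (hC : C.Smooth)
    (hV : Module.finrank k V = 4) (hpol : C.polar p q n = 0) : C.deriv q n ≠ 0 := by
  obtain ⟨x, hx, hxn⟩ := hC.exists_deriv_apply_ne_zero hV h.mem_lines h.notMem
  rw [← h.span_pair_eq] at hx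
  obtain ⟨s, t, rfl⟩ := Submodule.mem_span_pair.1 hx
  intro hq
  simp [deriv_smul_add_smul, hq, hpol, h.deriv_apply_eq_zero] at hxn

-- The left-hand side is `C.deriv (n + r • q) q`, and `p, n + r • q, q` is a tangent frame for the
-- line spanned by `p` and `n + r • q`.
lemma deriv_add_two_mul_ne_zero (h : C.IsTangentFrame W p q n) (hC : C.Smooth)
    (hV : Module.finrank k V = 4) (hpol : C.polar p q n = 0) (hnp : C.deriv n p = 0) {r : k}
    (hr : C.deriv q n * r ^ 2 + C.deriv n q * r + C.cubic n = 0) :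
    C.deriv n q + 2 * r * C.deriv q n ≠ 0 := by
  have hU : Submodule.span k {p, n + r • q} ∈ C.linesThrough p \ {W} := by
    rw [h.linesThrough_sdiff_singleton hC hV]
    exact ⟨r, ⟨hr, by rw [hpol, hnp, zero_mul, add_zero]⟩, rfl⟩
  have hq : q ∉ Submodule.span k {p, n + r • q} := fun hq =>
    hU.2 ((span_pair_eq_of_finrank_eq_two hU.1.1.1 hU.1.2 hq h.linearIndependent).symm.trans
      h.span_pair_eq)
  have hframe : C.IsTangentFrame (Submodule.span k {p, n + r • q}) p (n + r • q) q :=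
    ⟨hU.1.1, hU.1.2, Submodule.subset_span (by simp), h.linearIndependent_add_smul r, hq,
      deriv_apply_eq_zero_of_mem h.mem_lines h.left_mem h.right_mem⟩
  have hqq : C.deriv q q = 0 :=
    deriv_apply_eq_zero_of_mem h.mem_lines h.right_mem h.right_mem
  have hpqq : C.polar p q q = 0 :=
    polar_apply_eq_zero_of_mem h.mem_lines h.left_mem h.right_mem h.right_mem
  have hne := hframe.deriv_right_apply_ne_zero hC hV (by
    rw [map_add, map_smul, LinearMap.add_apply, LinearMap.smul_apply, hpqq,
      polar_right_comm, hpol, smul_zero, add_zero])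
  have hcomm : C.polar n q q = 2 * C.deriv q n := by
    rw [polar_rotate, polar_self, LinearMap.smul_apply, smul_eq_mul]
  rw [deriv_add, deriv_smul, map_smul, LinearMap.add_apply, LinearMap.add_apply,
    LinearMap.smul_apply, LinearMap.smul_apply, hqq, hcomm, smul_eq_mul, smul_eq_mul] at hne
  contrapose! hne
  linear_combination hne

theorem isEckardt_iff (h : C.IsTangentFrame W p q n) (hC : C.Smooth)
    (hV : Module.finrank k V = 4) :
    C.IsEckardt p ↔ C.polar p q n = 0 ∧ C.deriv n p = 0 := by
  have hcard : C.IsEckardt p ↔ 1 < (C.linesThrough p \ {W}).encard := by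
    have hW : W ∈ C.linesThrough p := ⟨h.mem_lines, h.left_mem⟩
    rw [IsEckardt, ← Set.encard_sdiff_singleton_add_one hW, ← one_add_one_eq_two,
      ENat.add_lt_add_iff_right ENat.one_ne_top]
  rw [hcard, h.linesThrough_sdiff_singleton hC hV, h.injective_span_add_smul.encard_image,
    Set.one_lt_encard_iff]
  constructor
  · rintro ⟨r, s, ⟨-, hr⟩, ⟨-, hs⟩, hrs⟩
    have hpol : C.polar p q n = 0 :=
      (mul_eq_zero.1 (by linear_combination hr - hs : _ * (r - s) = 0)).resolve_right
        (sub_ne_zero.2 hrs)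
    exact ⟨hpol, by linear_combination hr - r * hpol⟩
  · rintro ⟨hpol, hnp⟩
    have hqn := h.deriv_right_apply_ne_zero hC hV hpol
    obtain ⟨r, hr⟩ := exists_quadratic_root hqn (C.deriv n q) (C.cubic n)
    have hlin (t : k) : C.polar p q n * t + C.deriv n p = 0 := by
      rw [hpol, hnp, zero_mul, add_zero]
    -- the other root of the quadratic polynomial, by Vieta
    refine ⟨r, -(C.deriv n q / C.deriv q n) - r, ⟨hr, hlin r⟩, ⟨?_, hlin _⟩, fun hrr => ?_⟩
    · field_simp
      linear_combination C.deriv q n * hr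
    · refine h.deriv_add_two_mul_ne_zero hC hV hpol hnp hr ?_
      field_simp at hrr
      linear_combination hrr

end IsTangentFrame

end TangentFrame

section EckardtPoints

variable {k V : Type*} [Field k] [IsAlgClosed k] [AddCommGroup V] [Module k V]
  {C : TrilinForm k V} {W : Submodule k V} {p q m n : V}

/-- The Eckardt points of the surface `V(C.cubic)` on the line `W`, as one-dimensional
subspaces. -/
def eckardtPoints (C : TrilinForm k V) (W : Submodule k V) : Set (Submodule k V) :=
  {L | ∃ p ∈ W, p ≠ 0 ∧ C.IsEckardt p ∧ Submodule.span k {p} = L}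

lemma IsTangentFrame.notMem_sup_span_singleton (hp : C.IsTangentFrame W p q m)
    (hq : C.IsTangentFrame W q p n) (hC : C.Smooth) (hV : Module.finrank k V = 4)
    (hpol : C.polar p q m = 0) : n ∉ W ⊔ Submodule.span k {m} := by
  intro hn
  obtain ⟨w, hw, _, hm, rfl⟩ := Submodule.mem_sup.1 hn
  obtain ⟨a, rfl⟩ := Submodule.mem_span_singleton.1 hm
  have hqm := hp.deriv_right_apply_ne_zero hC hV hpol
  have ha : a = 0 := by
    simpa [deriv_apply_eq_zero_of_mem hq.mem_lines hq.left_mem hw, hqm]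
      using hq.deriv_apply_eq_zero
  exact hq.notMem (by simpa [ha] using hw)

theorem polar_eq_zero_of_isEckardt (hC : C.Smooth) (hV : Module.finrank k V = 4)
    (hW : W ∈ C.lines) (hpW : p ∈ W) (hqW : q ∈ W) (hpq : LinearIndependent k ![p, q])
    (hp : C.IsEckardt p) (hq : C.IsEckardt q) : C.polar p q = 0 := by
  have : FiniteDimensional k V := Module.finite_of_finrank_eq_succ hV
  obtain ⟨m, hm⟩ := exists_isTangentFrame hV hW hpW hqW hpq
  obtain ⟨n, hn⟩ := exists_isTangentFrame hV hW hqW hpW (LinearIndependent.pair_symm_iff.1 hpq)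
  have hpm : C.polar p q m = 0 := ((hm.isEckardt_iff hC hV).1 hp).1
  have hqn : C.polar q p n = 0 := ((hn.isEckardt_iff hC hV).1 hq).1
  rw [polar_comm] at hqn
  exact eq_zero_of_sup_span_singleton_eq_top
    (sup_span_singleton_sup_span_singleton_eq_top (by rw [hW.1, hV]) hm.notMem
      (hm.notMem_sup_span_singleton hn hC hV hpm))
    (fun _ hu => polar_apply_eq_zero_of_mem hW hpW hqW hu) hpm hqn

-- For three Eckardt points `p`, `q` and `s • p + t • q`, expanding `C.polar p (s • p + t • q) = 0`
-- gives `(2 * s) • C.deriv p = 0`.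
theorem encard_eckardtPoints_le_two (hC : C.Smooth) (hV : Module.finrank k V = 4)
    (hW : W ∈ C.lines) (h2 : (2 : k) ≠ 0) : (C.eckardtPoints W).encard ≤ 2 := by
  by_contra! hcard
  obtain ⟨_, _, _, ⟨p, hpW, hp0, hp, rfl⟩, ⟨q, hqW, hq0, hq, rfl⟩, ⟨r, hrW, hr0, hr, rfl⟩,
    hpq, hpr, hqr⟩ := two_lt_encard_iff.1 hcard
  replace hpq := linearIndependent_pair_of_span_singleton_ne hp0 hq0 hpq
  replace hpr := linearIndependent_pair_of_span_singleton_ne hp0 hr0 hpr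
  have hpolq := polar_eq_zero_of_isEckardt hC hV hW hpW hqW hpq hp hq
  have hpolr := polar_eq_zero_of_isEckardt hC hV hW hpW hrW hpr hp hr
  rw [← span_pair_eq_of_finrank_eq_two hW.1 hpW hqW hpq] at hrW
  obtain ⟨s, t, rfl⟩ := Submodule.mem_span_pair.1 hrW
  have hs : s = 0 := by
    simpa [polar_apply_smul_add_smul_self, hpolq, hC.deriv_ne_zero hW hpW hp0, h2] using hpolr
  subst hs
  rw [zero_smul, zero_add] at hr0 hqr
  exact hqr (Submodule.span_singleton_smul_eq (IsUnit.mk0 t (left_ne_zero_of_smul hr0)) q).symm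

end EckardtPoints

section CharTwo

variable {k V : Type*} [Field k] [AddCommGroup V] [Module k V]

/-- Tangent frames at two Eckardt points `p` and `q` of a line `W`, with `m` and `n` scaled so that
in characteristic two the vector `x ^ 2 • m + n` is tangent to the surface at `x • p + q`. -/
structure IsEckardtFrame (C : TrilinForm k V) (W : Submodule k V) (p q m n : V) : Prop where
  left : C.IsTangentFrame W p q m
  right : C.IsTangentFrame W q p n
  isEckardt_left : C.IsEckardt p
  isEckardt_right : C.IsEckardt q
  deriv_apply_eq : C.deriv p n = C.deriv q m

/-- The quartic polynomial `C.deriv (x ^ 2 • m + n) (x • p + q)` in `x`, for an Eckardt frame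
`p, q, m, n`. -/
noncomputable def eckardtQuartic (C : TrilinForm k V) (p q m n : V) : Polynomial k :=
  .C (C.deriv m q) * .X ^ 4 + .C (C.polar m n p) * .X ^ 3 + .C (C.polar m n q) * .X ^ 2 +
    .C (C.deriv n p) * .X

variable [IsAlgClosed k] {C : TrilinForm k V} {W : Submodule k V} {p q m n : V}

lemma exists_isEckardtFrame (hC : C.Smooth) (hV : Module.finrank k V = 4) (hW : W ∈ C.lines)
    (hpW : p ∈ W) (hqW : q ∈ W) (hpq : LinearIndependent k ![p, q]) (hp : C.IsEckardt p)
    (hq : C.IsEckardt q) : ∃ m n, C.IsEckardtFrame W p q m n := by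
  obtain ⟨m, hm⟩ := exists_isTangentFrame hV hW hpW hqW hpq
  obtain ⟨n, hn⟩ := exists_isTangentFrame hV hW hqW hpW (LinearIndependent.pair_symm_iff.1 hpq)
  have hqm := hm.deriv_right_apply_ne_zero hC hV ((hm.isEckardt_iff hC hV).1 hp).1
  have hpn := hn.deriv_right_apply_ne_zero hC hV ((hn.isEckardt_iff hC hV).1 hq).1
  refine ⟨C.deriv p n • m, C.deriv q m • n, hm.smul hpn, hn.smul hqm, hp, hq, ?_⟩
  rw [map_smul, map_smul, smul_eq_mul, smul_eq_mul, mul_comm]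

namespace IsEckardtFrame

lemma polar_eq_zero (h : C.IsEckardtFrame W p q m n) (hC : C.Smooth)
    (hV : Module.finrank k V = 4) : C.polar p q = 0 :=
  polar_eq_zero_of_isEckardt hC hV h.left.mem_lines h.left.left_mem h.left.right_mem
    h.left.linearIndependent h.isEckardt_left h.isEckardt_right

lemma eval_eckardtQuartic (h : C.IsEckardtFrame W p q m n) (hC : C.Smooth)
    (hV : Module.finrank k V = 4) (x : k) :
    (C.eckardtQuartic p q m n).eval x = C.deriv (x ^ 2 • m + n) (x • p + q) := by
  have hmp : C.deriv m p = 0 := ((h.left.isEckardt_iff hC hV).1 h.isEckardt_left).2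
  have hnq : C.deriv n q = 0 := ((h.right.isEckardt_iff hC hV).1 h.isEckardt_right).2
  simp only [eckardtQuartic, deriv_add, deriv_smul, map_add, map_smul, LinearMap.add_apply,
    LinearMap.smul_apply, smul_eq_mul, hmp, hnq, Polynomial.eval_add, Polynomial.eval_mul,
    Polynomial.eval_pow, Polynomial.eval_C, Polynomial.eval_X]
  ring

lemma eckardtPoints_eq (h : C.IsEckardtFrame W p q m n) : C.eckardtPoints W =
    insert (Submodule.span k {p})
      ((fun x : k => Submodule.span k {x • p + q}) '' {x | C.IsEckardt (x • p + q)}) := by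
  ext L
  constructor
  · rintro ⟨z, hzW, hz0, hz, rfl⟩
    rw [← h.left.span_pair_eq] at hzW
    obtain hzp | ⟨x, hx⟩ := span_singleton_eq_or_exists_of_mem_span_pair hzW hz0
    · exact .inl hzp
    · exact .inr ⟨x, (isEckardt_congr hx).1 hz, hx.symm⟩
  · rintro (rfl | ⟨x, hx, rfl⟩)
    · exact ⟨p, h.left.left_mem, h.left.left_ne_zero, h.isEckardt_left, rfl⟩
    · exact ⟨_, W.add_mem (W.smul_mem x h.left.left_mem) h.left.right_mem,
        ((LinearIndependent.pair_add_smul_right_iff x).2 h.left.linearIndependent).ne_zero 1, hx,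
        rfl⟩

end IsEckardtFrame

variable [CharP k 2]

lemma IsTangentFrame.deriv_apply_right_ne_zero (h : C.IsTangentFrame W p q n) (hC : C.Smooth)
    (hV : Module.finrank k V = 4) (hp : C.IsEckardt p) : C.deriv n q ≠ 0 := by
  obtain ⟨hpol, hnp⟩ := (h.isEckardt_iff hC hV).1 hp
  obtain ⟨r, hr⟩ := exists_quadratic_root (h.deriv_right_apply_ne_zero hC hV hpol)
    (C.deriv n q) (C.cubic n)
  simpa [CharTwo.two_eq_zero] using h.deriv_add_two_mul_ne_zero hC hV hpol hnp hr

namespace IsEckardtFrame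

lemma isTangentFrame (h : C.IsEckardtFrame W p q m n) (hC : C.Smooth)
    (hV : Module.finrank k V = 4) (x : k) :
    C.IsTangentFrame W (x • p + q) p (x ^ 2 • m + n) where
  mem_lines := h.left.mem_lines
  left_mem := W.add_mem (W.smul_mem x h.left.left_mem) h.left.right_mem
  right_mem := h.left.left_mem
  linearIndependent := LinearIndependent.pair_symm_iff.1
    ((LinearIndependent.pair_add_smul_right_iff x).2 h.left.linearIndependent)
  notMem hW := by
    have hpm : C.polar p q m = 0 := by rw [h.polar_eq_zero hC hV, LinearMap.zero_apply]
    refine h.left.notMem_sup_span_singleton h.right hC hV hpm ?_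
    have hm : x ^ 2 • m ∈ Submodule.span k {m} :=
      Submodule.smul_mem _ _ (Submodule.mem_span_singleton_self m)
    simpa using Submodule.sub_mem _ (Submodule.mem_sup_left hW) (Submodule.mem_sup_right hm)
  deriv_apply_eq_zero := by
    have hder : C.deriv (x • p + q) = x ^ 2 • C.deriv p + C.deriv q := by
      rw [deriv_add, deriv_smul, map_smul, LinearMap.smul_apply, h.polar_eq_zero hC hV, smul_zero,
        add_zero]
    simp only [hder, map_add, map_smul, LinearMap.add_apply, LinearMap.smul_apply, smul_eq_mul,
      h.left.deriv_apply_eq_zero, h.right.deriv_apply_eq_zero, h.deriv_apply_eq]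
    linear_combination x ^ 2 * C.deriv q m * CharTwo.two_eq_zero (R := k)

lemma eval_derivative_eckardtQuartic (h : C.IsEckardtFrame W p q m n) (hC : C.Smooth)
    (hV : Module.finrank k V = 4) (x : k) :
    (C.eckardtQuartic p q m n).derivative.eval x = C.deriv (x ^ 2 • m + n) p := by
  have hmp : C.deriv m p = 0 := ((h.left.isEckardt_iff hC hV).1 h.isEckardt_left).2
  simp only [eckardtQuartic, deriv_add, deriv_smul, map_smul, LinearMap.add_apply,
    LinearMap.smul_apply, smul_eq_mul, hmp, Polynomial.derivative_add, Polynomial.derivative_C_mul,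
    Polynomial.derivative_X_pow, Polynomial.derivative_X, Polynomial.eval_add, Polynomial.eval_mul,
    Polynomial.eval_pow, Polynomial.eval_C, Polynomial.eval_X, Polynomial.eval_one]
  push_cast
  linear_combination (2 * x ^ 3 * C.deriv m q + x ^ 2 * C.polar m n p + x * C.polar m n q) *
    CharTwo.two_eq_zero (R := k)

lemma natDegree_eckardtQuartic (h : C.IsEckardtFrame W p q m n) (hC : C.Smooth)
    (hV : Module.finrank k V = 4) : (C.eckardtQuartic p q m n).natDegree = 4 := by
  have hmq := h.left.deriv_apply_right_ne_zero hC hV h.isEckardt_left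
  rw [eckardtQuartic]
  compute_degree!

lemma isEckardt_smul_add_iff (h : C.IsEckardtFrame W p q m n) (hC : C.Smooth)
    (hV : Module.finrank k V = 4) (x : k) :
    C.IsEckardt (x • p + q) ↔ (C.eckardtQuartic p q m n).IsRoot x := by
  have hpol : C.polar (x • p + q) p = 0 := by
    rw [polar_comm, map_add, map_smul, polar_self, CharTwo.two_eq_zero, zero_smul, smul_zero,
      h.polar_eq_zero hC hV, zero_add]
  rw [(h.isTangentFrame hC hV x).isEckardt_iff hC hV, Polynomial.IsRoot,
    h.eval_eckardtQuartic hC hV, hpol, LinearMap.zero_apply, eq_self_iff_true, true_and]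

lemma encard_setOf_isEckardt_smul_add (h : C.IsEckardtFrame W p q m n) (hC : C.Smooth)
    (hV : Module.finrank k V = 4) : {x : k | C.IsEckardt (x • p + q)}.encard = 4 := by
  have hsep : (C.eckardtQuartic p q m n).Separable := separable_of_forall_isRoot fun x hx => by
    rw [Polynomial.IsRoot, h.eval_derivative_eckardtQuartic hC hV]
    exact (h.isTangentFrame hC hV x).deriv_apply_right_ne_zero hC hV
      ((h.isEckardt_smul_add_iff hC hV x).2 hx)
  simp only [h.isEckardt_smul_add_iff hC hV]
  rw [encard_setOf_isRoot_eq_natDegree hsep, h.natDegree_eckardtQuartic hC hV]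
  rfl

lemma encard_eckardtPoints (h : C.IsEckardtFrame W p q m n) (hC : C.Smooth)
    (hV : Module.finrank k V = 4) : (C.eckardtPoints W).encard = 5 := by
  rw [h.eckardtPoints_eq, Set.encard_insert_of_notMem,
    (injective_span_singleton_smul_add h.left.linearIndependent).encard_image,
    h.encard_setOf_isEckardt_smul_add hC hV]
  · rfl
  rintro ⟨x, -, hx : Submodule.span k {x • p + q} = Submodule.span k {p}⟩
  obtain ⟨c, hc⟩ := Submodule.mem_span_singleton.1 (hx ▸ Submodule.mem_span_singleton_self _)
  exact (LinearIndependent.pair_iff' h.left.left_ne_zero).1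
    ((LinearIndependent.pair_add_smul_right_iff x).2 h.left.linearIndependent) c hc

end IsEckardtFrame

theorem encard_eckardtPoints_of_charTwo (hC : C.Smooth) (hV : Module.finrank k V = 4)
    (hW : W ∈ C.lines) : (C.eckardtPoints W).encard = 0 ∨ (C.eckardtPoints W).encard = 1 ∨
      (C.eckardtPoints W).encard = 5 := by
  by_cases hcard : (C.eckardtPoints W).encard ≤ 1
  · obtain h | ⟨L, h⟩ := Set.encard_le_one_iff_eq.1 hcard <;> simp [h]
  · obtain ⟨_, _, ⟨p, hpW, hp0, hp, rfl⟩, ⟨q, hqW, hq0, hq, rfl⟩, hpq⟩ :=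
      Set.one_lt_encard_iff.1 (not_le.1 hcard)
    obtain ⟨m, n, h⟩ := exists_isEckardtFrame hC hV hW hpW hqW
      (linearIndependent_pair_of_span_singleton_ne hp0 hq0 hpq) hp hq
    exact .inr (.inr (h.encard_eckardtPoints hC hV))

end CharTwo

namespace Represents

variable {k : Type*} [Field k] {C : TrilinForm k (Fin 4 → k)} {F : MvPolynomial (Fin 4) k}

lemma isLineIn_iff (h : C.Represents F) (U : Submodule k (Fin 4 → k)) :
    IsLineIn F U ↔ U ∈ C.lines := by
  simp only [IsLineIn, VanishesOn, h.eval_eq]; rfl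

lemma smooth (h : C.Represents F)
    (hF : ∀ x, eval x F = 0 → (∀ i, eval x (pderiv i F) = 0) → x = 0) : C.Smooth := by
  intro x hx hd
  refine hF x (by rw [h.eval_eq, hx]) fun i => ?_
  rw [h.eval_pderiv_eq, hd, LinearMap.zero_apply]

lemma isEckardtPoint_span_singleton_iff (h : C.Represents F) {p : Fin 4 → k} (hp : p ≠ 0) :
    IsEckardtPoint F (Submodule.span k {p}) ↔ C.IsEckardt p := by
  rw [IsEckardtPoint, IsEckardt, two_lt_encard_iff]
  simp only [finrank_span_singleton hp, true_and, h.isLineIn_iff, linesThrough, Set.mem_ofPred_eq,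
    Submodule.span_singleton_le_iff_mem]
  refine exists_congr fun U₁ => exists_congr fun U₂ => exists_congr fun U₃ => ?_
  tauto

lemma setOf_isEckardtPoint (h : C.Represents F) (W : Submodule k (Fin 4 → k)) :
    {L | IsEckardtPoint F L ∧ L ≤ W} = C.eckardtPoints W := by
  ext L
  constructor
  · rintro ⟨hL, hLW⟩
    let P := Projectivization.mk'' L hL.1
    have hspan : Submodule.span k {P.rep} = L := by
      rw [← P.submodule_eq, Projectivization.submodule_mk'']
    rw [← hspan] at hL hLW
    exact ⟨P.rep, (Submodule.span_singleton_le_iff_mem ..).1 hLW, P.rep_nonzero,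
      (h.isEckardtPoint_span_singleton_iff P.rep_nonzero).1 hL, hspan⟩
  · rintro ⟨p, hpW, hp0, hp, rfl⟩
    exact ⟨(h.isEckardtPoint_span_singleton_iff hp0).2 hp,
      (Submodule.span_singleton_le_iff_mem ..).2 hpW⟩

end Represents

end TrilinForm

/-- Let `ℓ` be a projective line contained in a smooth cubic
surface `V(F)`.  If `char k ≠ 2` then `ℓ` contains at most two Eckardt points
of `V(F)`; if `char k = 2` then `ℓ` contains exactly `0`, `1`, or `5` Eckardt
points of `V(F)`. -/
theorem stmt2 {k : Type*} [Field k] [IsAlgClosed k]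
    (F : MvPolynomial (Fin 4) k) (hF0 : F ≠ 0) (hhom : F.IsHomogeneous 3)
    (hsmooth : ∀ x : Fin 4 → k,
      eval x F = 0 → (∀ i, eval x (pderiv i F) = 0) → x = 0)
    (W : Submodule k (Fin 4 → k)) (hW : Module.finrank k W = 2)
    (hWF : VanishesOn F W) :
    (ringChar k ≠ 2 →
      {L : Submodule k (Fin 4 → k) | IsEckardtPoint F L ∧ L ≤ W}.Finite ∧
      {L : Submodule k (Fin 4 → k) | IsEckardtPoint F L ∧ L ≤ W}.ncard ≤ 2) ∧
    (ringChar k = 2 →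
      {L : Submodule k (Fin 4 → k) | IsEckardtPoint F L ∧ L ≤ W}.Finite ∧
      ({L : Submodule k (Fin 4 → k) | IsEckardtPoint F L ∧ L ≤ W}.ncard = 0 ∨
       {L : Submodule k (Fin 4 → k) | IsEckardtPoint F L ∧ L ≤ W}.ncard = 1 ∨
       {L : Submodule k (Fin 4 → k) | IsEckardtPoint F L ∧ L ≤ W}.ncard = 5)) := by
  obtain ⟨C, hC⟩ := TrilinForm.exists_represents hhom
  have hline : W ∈ C.lines := (hC.isLineIn_iff W).1 ⟨hW, hWF⟩
  have hV : Module.finrank k (Fin 4 → k) = 4 := Module.finrank_fin_fun k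
  rw [hC.setOf_isEckardtPoint W]
  constructor
  · intro hchar
    exact Set.encard_le_coe_iff_finite_ncard_le.1 <| TrilinForm.encard_eckardtPoints_le_two
      (hC.smooth hsmooth) hV hline (Ring.two_ne_zero hchar)
  · intro hchar
    have : CharP k 2 := ringChar.eq_iff.1 hchar
    have hcard := TrilinForm.encard_eckardtPoints_of_charTwo (hC.smooth hsmooth) hV hline
    refine ⟨Set.encard_ne_top_iff.1 ?_, ?_⟩ <;>
      rcases hcard with h | h | h <;> simp [Set.ncard_def, h]
end

section
/- Let F be a nonzero homogeneous polynomial of degree 3 in k[x₀,x₁,x₂,x₃] such that the cubic surface V(F) is smooth, and let ℓ be a projective line in ℙ³(k) that is NOT contained in V(F). If ℓ contains at least two Eckardt points of V(F), then ℓ contains exactly three Eckardt points of V(F). -/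
open MvPolynomial Matrix

/- By Taylor's formula a cubic form `f` satisfies
`f (s • p + t • q) = s³ f(p) + s² t df_p(q) + s t² df_q(p) + t³ f(q)`.
A line contained in the surface `f = 0` and passing through `p` therefore lies on the tangent plane
`df_p = 0` and on the polar quadric `df_x(p) = 0`. At an Eckardt point `p` three such lines force
this quadric to contain the whole tangent plane, so that `df_x(p) = df_p(x) m(x)` for a linear
form `m`; polarizing this identity at `p` gives `m(p) = 2`. Taylor's formula then shows that the
reflection `x ↦ x - m(x) • p` preserves `f`; hence it maps a second Eckardt point `q` to an Eckardt
point `r = q - m(q) • p`. On the line through `p` and `q` the form is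
`f (s • p + t • q) = s t df_p(q) (s + t m(q))`. When it does not vanish identically, neither do
`df_p(q)` and `df_q(p) = df_p(q) m(q)`, so its zeros are the three distinct points `p`, `q`
and `r`. -/

section Lines

variable {k V : Type*} [Field k] [AddCommGroup V] [Module k V]

lemma exists_eq_span_singleton_of_finrank_eq_one {L : Submodule k V}
    (hL : Module.finrank k L = 1) : ∃ x ≠ 0, L = k ∙ x := by
  have hatom : IsAtom L := Submodule.isAtom_iff_finrank_eq_one.2 hL
  obtain ⟨x, hxL, hx0⟩ := L.exists_mem_ne_zero_of_ne_bot hatom.1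
  refine ⟨x, hx0, ((hatom.le_iff_eq ?_).1 ?_).symm⟩
  · rwa [Ne, Submodule.span_singleton_eq_bot]
  · rwa [Submodule.span_singleton_le_iff_mem]

lemma span_singleton_smul_eq_of_ne_zero {a : k} {p : V} (h : a • p ≠ 0) : k ∙ (a • p) = k ∙ p :=
  Submodule.span_singleton_smul_eq (left_ne_zero_of_smul h).isUnit p

lemma linearIndependent_pair_of_span_singleton_ne_s3 {p q : V} (hp : p ≠ 0) (hq : q ≠ 0)
    (hpq : k ∙ p ≠ k ∙ q) : LinearIndependent k ![p, q] := by
  refine (LinearIndependent.pair_iff' hp).2 ?_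
  rintro a rfl
  exact hpq (span_singleton_smul_eq_of_ne_zero hq).symm

lemma span_singleton_ne_of_linearIndependent {p q : V} (hpq : LinearIndependent k ![p, q]) {c : k}
    (hc : c ≠ 0) : k ∙ p ≠ k ∙ (q - c • p) ∧ k ∙ q ≠ k ∙ (q - c • p) := by
  rw [LinearIndependent.pair_iff] at hpq
  simp only [Ne, Submodule.span_singleton_eq_span_singleton, Units.smul_def]
  constructor
  · rintro ⟨u, hu⟩
    refine one_ne_zero (hpq (-(u + c)) 1 ?_).2
    rw [neg_smul, add_smul, hu]
    module
  · rintro ⟨u, hu⟩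
    refine hc (hpq c (u - 1) ?_).1
    rw [sub_smul, hu]
    module

lemma span_pair_eq_of_finrank_eq_two_s3 {W : Submodule k V} (hW : Module.finrank k W = 2) {p q : V}
    (hp : p ∈ W) (hq : q ∈ W) (hpq : LinearIndependent k ![p, q]) :
    Submodule.span k {p, q} = W := by
  have : FiniteDimensional k W := Module.finite_of_finrank_eq_succ hW
  refine Submodule.eq_of_le_of_finrank_eq (Submodule.span_le.2 (Set.pair_subset hp hq)) ?_
  have hcard := finrank_span_eq_card hpq
  rw [Matrix.range_cons_cons_empty, Fintype.card_fin] at hcard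
  rw [hcard, hW]

lemma exists_mem_linearIndependent_pair_of_finrank_eq_two {W : Submodule k V}
    (hW : Module.finrank k W = 2) {p : V} (hp : p ∈ W) (hp0 : p ≠ 0) :
    ∃ w ∈ W, LinearIndependent k ![p, w] := by
  obtain ⟨w, hw⟩ := exists_linearIndependent_pair_of_one_lt_finrank
    (one_lt_two.trans_eq hW.symm) (x := (⟨p, hp⟩ : W)) (by simpa using hp0)
  refine ⟨w, w.2, ?_⟩
  rw [LinearIndependent.pair_iff] at hw ⊢
  exact fun s t hst ↦ hw s t (Subtype.ext hst)

lemma sup_eq_ker_of_finrank_eq_two {W₁ W₂ : Submodule k V} {f : Module.Dual k V}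
    (hV : Module.finrank k V = 4) (hf : f ≠ 0) (h₁ : Module.finrank k W₁ = 2)
    (h₂ : Module.finrank k W₂ = 2) (h₁₂ : W₁ ≠ W₂) (hf₁ : W₁ ≤ LinearMap.ker f)
    (hf₂ : W₂ ≤ LinearMap.ker f) : W₁ ⊔ W₂ = LinearMap.ker f := by
  have : FiniteDimensional k V := Module.finite_of_finrank_eq_succ hV
  have hker := Module.Dual.finrank_ker_add_one_of_ne_zero hf
  have hlt : W₁ < W₁ ⊔ W₂ := left_lt_sup.2 fun hle ↦
    h₁₂ (Submodule.eq_of_le_of_finrank_eq hle (h₂.trans h₁.symm)).symm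
  refine Submodule.eq_of_le_of_finrank_le (sup_le hf₁ hf₂) ?_
  have := Submodule.finrank_lt_finrank_of_lt hlt
  omega

end Lines

section QuadraticForms

open QuadraticMap

lemma exists_eq_linMulLin_of_eq_zero_on_ker {R M : Type*} [CommRing R] [AddCommGroup M]
    [Module R M] {Q : QuadraticForm R M} {f : Module.Dual R M} {v : M} (hv : f v = 1)
    (hQ : ∀ x, f x = 0 → Q x = 0) : ∃ g : Module.Dual R M, Q = linMulLin f g := by
  refine ⟨Q.polarBilin v - Q v • f, QuadraticMap.ext fun x ↦ ?_⟩
  have hker : Q (x - f x • v) = 0 := hQ _ (by simp [hv])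
  have hpolar : polar Q (x - f x • v) (f x • v) = f x * polar Q v x - f x ^ 2 * (2 * Q v) := by
    simp only [polar_sub_left, polar_smul_left, polar_smul_right, polar_self, polar_comm Q x v,
      smul_eq_mul, nsmul_eq_mul, Nat.cast_ofNat]
    ring
  calc Q x = Q (x - f x • v + f x • v) := by rw [sub_add_cancel]
    _ = f x ^ 2 * Q v + (f x * polar Q v x - f x ^ 2 * (2 * Q v)) := by
      rw [QuadraticMap.map_add Q, hker, hpolar, QuadraticMap.map_smul, smul_eq_mul]
      ring
    _ = linMulLin f (Q.polarBilin v - Q v • f) x := by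
      simp only [linMulLin_apply, LinearMap.sub_apply, LinearMap.smul_apply, polarBilin_apply_apply,
        smul_eq_mul]
      ring

variable {k V : Type*} [Field k] [AddCommGroup V] [Module k V]

lemma eq_zero_on_sup_of_eq_zero_on_three {Q : QuadraticForm k V} {p : V} (hp0 : p ≠ 0)
    {W₁ W₂ W₃ : Submodule k V} (h₁ : Module.finrank k W₁ = 2) (h₂ : Module.finrank k W₂ = 2)
    (h₃ : Module.finrank k W₃ = 2) (hp₁ : p ∈ W₁) (hp₂ : p ∈ W₂) (hp₃ : p ∈ W₃)
    (h₁₃ : W₁ ≠ W₃) (h₂₃ : W₂ ≠ W₃) (hle : W₃ ≤ W₁ ⊔ W₂) (hQ₁ : ∀ x ∈ W₁, Q x = 0)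
    (hQ₂ : ∀ x ∈ W₂, Q x = 0) (hQ₃ : ∀ x ∈ W₃, Q x = 0) : ∀ x ∈ W₁ ⊔ W₂, Q x = 0 := by
  have polar_eq_zero {W : Submodule k V} (hW : ∀ x ∈ W, Q x = 0) {x y : V} (hx : x ∈ W)
      (hy : y ∈ W) : polar Q x y = 0 := by
    simp [polar, hW _ (W.add_mem hx hy), hW x hx, hW y hy]
  obtain ⟨w, hw, hpw⟩ := exists_mem_linearIndependent_pair_of_finrank_eq_two h₃ hp₃ hp0
  have notMem {W : Submodule k V} (hW : Module.finrank k W = 2) (hpW : p ∈ W) (hne : W ≠ W₃) :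
      w ∉ W := fun hwW ↦ hne <| by
    rw [← span_pair_eq_of_finrank_eq_two_s3 hW hpW hwW hpw,
      span_pair_eq_of_finrank_eq_two_s3 h₃ hp₃ hw hpw]
  obtain ⟨y₁, hy₁, y₂, hy₂, rfl⟩ := Submodule.mem_sup.1 (hle hw)
  have hy₁₂ : polar Q y₁ y₂ = 0 := by simp [polar, hQ₃ _ hw, hQ₁ y₁ hy₁, hQ₂ y₂ hy₂]
  have hpy₁ : LinearIndependent k ![p, y₁] := (LinearIndependent.pair_iff' hp0).2 fun a ha ↦
    notMem h₂ hp₂ h₂₃ (W₂.add_mem (ha ▸ W₂.smul_mem a hp₂) hy₂)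
  have hpy₂ : LinearIndependent k ![p, y₂] := (LinearIndependent.pair_iff' hp0).2 fun a ha ↦
    notMem h₁ hp₁ h₁₃ (W₁.add_mem hy₁ (ha ▸ W₁.smul_mem a hp₁))
  intro x hx
  obtain ⟨x₁, hx₁, x₂, hx₂, rfl⟩ := Submodule.mem_sup.1 hx
  obtain ⟨a, b, hab⟩ := Submodule.mem_span_pair.1
    ((span_pair_eq_of_finrank_eq_two_s3 h₁ hp₁ hy₁ hpy₁).symm ▸ hx₁)
  obtain ⟨c, d, hcd⟩ := Submodule.mem_span_pair.1
    ((span_pair_eq_of_finrank_eq_two_s3 h₂ hp₂ hy₂ hpy₂).symm ▸ hx₂)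
  rw [QuadraticMap.map_add Q, hQ₁ x₁ hx₁, hQ₂ x₂ hx₂, ← hab, ← hcd]
  simp only [polar_add_left, polar_add_right, polar_smul_left, polar_smul_right, hy₁₂,
    polar_eq_zero hQ₁ hp₁ hp₁, polar_eq_zero hQ₁ hy₁ hp₁, polar_eq_zero hQ₂ hp₂ hy₂, smul_zero,
    add_zero]

end QuadraticForms

/-- Trilinear forms on `M`. A cubic form is encoded by a trilinear form restricted to the diagonal;
symmetry is not required, since over a field of characteristic 2 or 3 not every cubic form is the
diagonal restriction of a symmetric trilinear form. -/
abbrev TrilinearForm (R M : Type*) [CommRing R] [AddCommGroup M] [Module R M] :=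
  M →ₗ[R] M →ₗ[R] M →ₗ[R] R

namespace TrilinearForm

section CommRing

variable {R M : Type*} [CommRing R] [AddCommGroup M] [Module R M] (B : TrilinearForm R M)

/-- The cubic form represented by a trilinear form. -/
def cubic (x : M) : R := B x x x

/-- The differential of the cubic form `B.cubic`: a linear form that depends quadratically on the
point at which it is taken. -/
def differential : QuadraticMap R M (Module.Dual R M) :=
  LinearMap.BilinMap.toQuadraticMap
    (B + LinearMap.lflip.toLinearMap ∘ₗ B + LinearMap.lflip.toLinearMap ∘ₗ B.flip)

/-- The quadratic form `x ↦ df_x(p)`, where `f` is the cubic form `B.cubic`; it defines the polar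
quadric of the point `p`. -/
def polarQuadric (p : M) : QuadraticForm R M :=
  (Module.Dual.eval R M p).compQuadraticMap B.differential

/-- A star point of the hypersurface `f = 0`, where `f` is the cubic form `B.cubic`: a smooth point
`p` of it whose tangent hyperplane cuts out a cone with vertex `p`. By Taylor's formula the last
condition says that the polar quadric of `p` contains the tangent hyperplane. -/
structure IsStarPoint (p : M) : Prop where
  cubic_eq_zero : B.cubic p = 0
  differential_ne_zero : B.differential p ≠ 0
  polarQuadric_eq_zero : ∀ x, B.differential p x = 0 → B.polarQuadric p x = 0

lemma differential_apply (x v : M) : B.differential x v = B x x v + B x v x + B v x x := rfl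

lemma polarQuadric_apply (p x : M) : B.polarQuadric p x = B.differential x p := rfl

lemma cubic_smul_add_smul (s t : R) (x y : M) :
    B.cubic (s • x + t • y) = s ^ 3 * B.cubic x + s ^ 2 * t * B.differential x y
      + s * t ^ 2 * B.differential y x + t ^ 3 * B.cubic y := by
  simp only [cubic, differential_apply, map_add, map_smul, LinearMap.add_apply,
    LinearMap.smul_apply, smul_eq_mul]
  ring

lemma differential_self (x : M) : B.differential x x = 3 * B.cubic x := by
  simp only [cubic, differential_apply]
  ring

lemma polar_polarQuadric_self_left (p x : M) :
    QuadraticMap.polar (B.polarQuadric p) p x = 2 * B.differential p x := by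
  simp only [QuadraticMap.polar, polarQuadric_apply, differential_apply, map_add,
    LinearMap.add_apply]
  ring

variable {B}

lemma cubic_reflection {p : M} {m : Module.Dual R M} (hp : B.cubic p = 0) (hm2 : m p = 2)
    (hm : ∀ x, B.differential x p = B.differential p x * m x) (x : M) :
    B.cubic (Module.reflection hm2 x) = B.cubic x := by
  have hreflect : Module.reflection hm2 x = (1 : R) • x + -m x • p := by
    rw [Module.reflection_apply]
    module
  rw [hreflect, cubic_smul_add_smul, hp, hm]
  ring

end CommRing

section Field

variable {k V : Type*} [Field k] [AddCommGroup V] [Module k V] {B : TrilinearForm k V}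

lemma differential_eq_zero_of_cubic_eq_zero_on (hk : 3 ≤ Cardinal.mk k) {W : Submodule k V}
    (hB : ∀ x ∈ W, B.cubic x = 0) {p x : V} (hp : p ∈ W) (hx : x ∈ W) :
    B.differential p x = 0 := by
  have htaylor (s : k) : s ^ 2 * B.differential p x + s * B.differential x p = 0 := by
    have h := B.cubic_smul_add_smul s 1 p x
    rw [hB p hp, hB x hx, hB _ (W.add_mem (W.smul_mem s hp) (W.smul_mem 1 hx))] at h
    linear_combination -h
  obtain ⟨c, hc0, hc1⟩ := Cardinal.exists_ne_ne_of_three_le hk 0 1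
  have hc : c * (c - 1) * B.differential p x = 0 := by
    linear_combination htaylor c - c * htaylor 1
  exact (mul_eq_zero.1 hc).resolve_left (mul_ne_zero hc0 (sub_ne_zero.2 hc1))

lemma isStarPoint_of_three_lines (hk : 3 ≤ Cardinal.mk k) (hV : Module.finrank k V = 4) {p : V}
    (hp : B.differential p ≠ 0) {W₁ W₂ W₃ : Submodule k V} (h₁₂ : W₁ ≠ W₂) (h₁₃ : W₁ ≠ W₃)
    (h₂₃ : W₂ ≠ W₃) (h₁ : Module.finrank k W₁ = 2) (h₂ : Module.finrank k W₂ = 2)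
    (h₃ : Module.finrank k W₃ = 2) (hp₁ : p ∈ W₁) (hp₂ : p ∈ W₂) (hp₃ : p ∈ W₃)
    (hB₁ : ∀ x ∈ W₁, B.cubic x = 0) (hB₂ : ∀ x ∈ W₂, B.cubic x = 0)
    (hB₃ : ∀ x ∈ W₃, B.cubic x = 0) : B.IsStarPoint p := by
  have le_ker {W : Submodule k V} (hpW : p ∈ W) (hW : ∀ x ∈ W, B.cubic x = 0) :
      W ≤ LinearMap.ker (B.differential p) :=
    fun _ hx ↦ differential_eq_zero_of_cubic_eq_zero_on hk hW hpW hx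
  have polarQuadric_eq_zero {W : Submodule k V} (hpW : p ∈ W) (hW : ∀ x ∈ W, B.cubic x = 0) :
      ∀ x ∈ W, B.polarQuadric p x = 0 :=
    fun _ hx ↦ differential_eq_zero_of_cubic_eq_zero_on hk hW hx hpW
  have hsup : W₁ ⊔ W₂ = LinearMap.ker (B.differential p) :=
    sup_eq_ker_of_finrank_eq_two hV hp h₁ h₂ h₁₂ (le_ker hp₁ hB₁) (le_ker hp₂ hB₂)
  have hp0 : p ≠ 0 := by
    rintro rfl
    exact hp (map_zero B.differential)
  refine ⟨hB₁ p hp₁, hp, fun x hx ↦ ?_⟩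
  exact eq_zero_on_sup_of_eq_zero_on_three hp0 h₁ h₂ h₃ hp₁ hp₂ hp₃ h₁₃ h₂₃
    (hsup ▸ le_ker hp₃ hB₃) (polarQuadric_eq_zero hp₁ hB₁) (polarQuadric_eq_zero hp₂ hB₂)
    (polarQuadric_eq_zero hp₃ hB₃) x (hsup ▸ LinearMap.mem_ker.2 hx)

lemma IsStarPoint.exists_dual {p : V} (hp : B.IsStarPoint p) :
    ∃ m : Module.Dual k V, m p = 2 ∧ ∀ x, B.differential x p = B.differential p x * m x := by
  obtain ⟨v, hv⟩ := LinearMap.surjective hp.differential_ne_zero 1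
  obtain ⟨m, hm⟩ := exists_eq_linMulLin_of_eq_zero_on_ker hv hp.polarQuadric_eq_zero
  refine ⟨m, ?_, fun x ↦ ?_⟩
  · have hpp : B.differential p p = 0 := by rw [differential_self, hp.cubic_eq_zero, mul_zero]
    have hpolar := B.polar_polarQuadric_self_left p v
    simp only [hm, QuadraticMap.polar, QuadraticMap.linMulLin_apply, map_add, hpp, hv] at hpolar
    linear_combination hpolar
  · rw [← polarQuadric_apply, hm, QuadraticMap.linMulLin_apply]

lemma IsStarPoint.differential_apply_ne_zero {p q : V} (hp : B.IsStarPoint p)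
    (hq : B.cubic q = 0) (hpq : ¬ ∀ x ∈ Submodule.span k {p, q}, B.cubic x = 0) :
    B.differential p q ≠ 0 := by
  refine fun hzero ↦ hpq fun x hx ↦ ?_
  obtain ⟨s, t, rfl⟩ := Submodule.mem_span_pair.1 hx
  have hqp : B.differential q p = 0 := hp.polarQuadric_eq_zero q hzero
  rw [cubic_smul_add_smul, hp.cubic_eq_zero, hq, hzero, hqp]
  ring

lemma eq_span_singleton_of_cubic_eq_zero_on {p q : V} {c : k} (hp : B.cubic p = 0)
    (hq : B.cubic q = 0) (hpq : B.differential p q ≠ 0)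
    (hqp : B.differential q p = B.differential p q * c) {L : Submodule k V}
    (hL : Module.finrank k L = 1) (hLe : L ≤ Submodule.span k {p, q})
    (hB : ∀ x ∈ L, B.cubic x = 0) : L = k ∙ p ∨ L = k ∙ q ∨ L = k ∙ (q - c • p) := by
  obtain ⟨x, hx0, rfl⟩ := exists_eq_span_singleton_of_finrank_eq_one hL
  have hxL := Submodule.mem_span_singleton_self (R := k) x
  obtain ⟨s, t, rfl⟩ := Submodule.mem_span_pair.1 (hLe hxL)
  have hroots : B.differential p q * (t * s * (s + t * c)) = 0 := by
    rw [← hB _ hxL, cubic_smul_add_smul, hp, hq, hqp]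
    ring
  rcases mul_eq_zero.1 ((mul_eq_zero.1 hroots).resolve_left hpq) with hts | hst
  · rcases mul_eq_zero.1 hts with rfl | rfl
    · rw [zero_smul, add_zero] at hx0 ⊢
      exact .inl (span_singleton_smul_eq_of_ne_zero hx0)
    · rw [zero_smul, zero_add] at hx0 ⊢
      exact .inr (.inl (span_singleton_smul_eq_of_ne_zero hx0))
  · have hx : s • p + t • q = t • (q - c • p) := by
      rw [eq_neg_of_add_eq_zero_left hst]
      module
    rw [hx] at hx0 ⊢
    exact .inr (.inr (span_singleton_smul_eq_of_ne_zero hx0))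

end Field

/-- The trilinear form `B` represents the polynomial `F`: its cubic form takes the values of `F`,
and its differential is given by the partial derivatives of `F`. The second condition is imposed
separately because over a finite field the values of `F` do not determine its derivatives. -/
structure Represents {σ R : Type*} [DecidableEq σ] [CommRing R] (B : TrilinearForm R (σ → R))
    (F : MvPolynomial σ R) : Prop where
  eval_eq : ∀ x, eval x F = B.cubic x
  eval_pderiv : ∀ x i, eval x (pderiv i F) = B.differential x (Pi.single i 1)

end TrilinearForm

open Pointwise in
lemma exists_represents_of_isHomogeneous {σ R : Type*} [DecidableEq σ] [CommRing R]
    {F : MvPolynomial σ R} (hF : F.IsHomogeneous 3) :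
    ∃ B : TrilinearForm R (σ → R), B.Represents F := by
  have hspan : F ∈ Submodule.span R (Set.range X ^ 3) := by
    rwa [← Submodule.span_pow, ← homogeneousSubmodule_one_eq_span_X, homogeneousSubmodule_one_pow]
  clear hF
  induction hspan using Submodule.span_induction with
  | mem G hG =>
    simp only [pow_succ, pow_zero, one_mul, Set.mem_mul, Set.mem_range] at hG
    obtain ⟨_, ⟨_, ⟨a, rfl⟩, _, ⟨b, rfl⟩, rfl⟩, _, ⟨c, rfl⟩, rfl⟩ := hG
    let coord (j : σ) : (σ → R) →ₗ[R] R := LinearMap.proj j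
    refine ⟨(coord a).smulRight ((coord b).smulRight (coord c)), fun x ↦ ?_, fun x i ↦ ?_⟩
    · simp [coord, TrilinearForm.cubic, mul_assoc]
    · have hX (j : σ) : eval x (pderiv i (X j)) = (Pi.single i 1 : σ → R) j := by
        rw [pderiv_X, Pi.single_apply, Pi.single_apply]
        split_ifs <;> simp
      simp only [Derivation.leibniz, hX, smul_eq_mul, map_add, map_mul, eval_X,
        TrilinearForm.differential_apply, LinearMap.smulRight_apply, LinearMap.smul_apply,
        LinearMap.proj_apply, coord]
      ring
  | zero => exact ⟨0, by simp [TrilinearForm.cubic], by simp [TrilinearForm.differential_apply]⟩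
  | add G H _ _ hG hH =>
    obtain ⟨B, hB⟩ := hG
    obtain ⟨B', hB'⟩ := hH
    refine ⟨B + B', fun x ↦ ?_, fun x i ↦ ?_⟩
    · simp [hB.eval_eq, hB'.eval_eq, TrilinearForm.cubic]
    · simp only [map_add, hB.eval_pderiv, hB'.eval_pderiv, TrilinearForm.differential_apply,
        LinearMap.add_apply]
      ring
  | smul a G _ hG =>
    obtain ⟨B, hB⟩ := hG
    refine ⟨a • B, fun x ↦ ?_, fun x i ↦ ?_⟩
    · simp [hB.eval_eq, TrilinearForm.cubic]
    · simp only [Derivation.map_smul, smul_eval, hB.eval_pderiv, TrilinearForm.differential_apply,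
        LinearMap.smul_apply, smul_eq_mul]
      ring

section EckardtPoints

variable {k : Type*} [Field k] {F : MvPolynomial (Fin 4) k}

lemma IsLineIn.map {W : Submodule k (Fin 4 → k)} (hW : IsLineIn F W)
    (e : (Fin 4 → k) ≃ₗ[k] (Fin 4 → k)) (he : ∀ x, eval (e x) F = eval x F) :
    IsLineIn F (W.map e.toLinearMap) := by
  refine ⟨(LinearEquiv.finrank_map_eq e W).trans hW.1, ?_⟩
  rintro _ ⟨x, hx, rfl⟩
  exact (he x).trans (hW.2 x hx)

lemma IsEckardtPoint.map {L : Submodule k (Fin 4 → k)} (hL : IsEckardtPoint F L)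
    (e : (Fin 4 → k) ≃ₗ[k] (Fin 4 → k)) (he : ∀ x, eval (e x) F = eval x F) :
    IsEckardtPoint F (L.map e.toLinearMap) := by
  have hinj := Submodule.map_injective_of_injective (f := e.toLinearMap) e.injective
  obtain ⟨hL, W₁, W₂, W₃, h₁₂, h₁₃, h₂₃, h₁, h₂, h₃, hle₁, hle₂, hle₃⟩ := hL
  exact ⟨(LinearEquiv.finrank_map_eq e L).trans hL, _, _, _, hinj.ne h₁₂, hinj.ne h₁₃,
    hinj.ne h₂₃, h₁.map e he, h₂.map e he, h₃.map e he, Submodule.map_mono hle₁,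
    Submodule.map_mono hle₂, Submodule.map_mono hle₃⟩

lemma IsEckardtPoint.vanishesOn {L : Submodule k (Fin 4 → k)} (hL : IsEckardtPoint F L) :
    VanishesOn F L := by
  obtain ⟨-, W, -, -, -, -, -, hW, -, -, hle, -, -⟩ := hL
  exact fun x hx ↦ hW.2 x (hle hx)

lemma IsEckardtPoint.cubic_eq_zero {B : TrilinearForm k (Fin 4 → k)} (hB : B.Represents F)
    {p : Fin 4 → k} (hp : IsEckardtPoint F (k ∙ p)) : B.cubic p = 0 :=
  hB.eval_eq p ▸ hp.vanishesOn p (Submodule.mem_span_singleton_self p)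

lemma IsEckardtPoint.isStarPoint {B : TrilinearForm k (Fin 4 → k)} (hB : B.Represents F)
    (hk : 3 ≤ Cardinal.mk k) {p : Fin 4 → k} (hp : IsEckardtPoint F (k ∙ p))
    (hsmooth : eval p F = 0 → (∀ i, eval p (pderiv i F) = 0) → p = 0) : B.IsStarPoint p := by
  have hdiff : B.differential p ≠ 0 := by
    intro hzero
    have hp0 : p = 0 := hsmooth (hp.vanishesOn p (Submodule.mem_span_singleton_self p))
      fun i ↦ by rw [hB.eval_pderiv, hzero, LinearMap.zero_apply]
    exact zero_ne_one (by rw [← hp.1, hp0, Submodule.span_zero_singleton, finrank_bot])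
  obtain ⟨-, W₁, W₂, W₃, h₁₂, h₁₃, h₂₃, h₁, h₂, h₃, hle₁, hle₂, hle₃⟩ := hp
  simp only [Submodule.span_singleton_le_iff_mem] at hle₁ hle₂ hle₃
  simp only [IsLineIn, VanishesOn, hB.eval_eq] at h₁ h₂ h₃
  exact TrilinearForm.isStarPoint_of_three_lines hk (by simp) hdiff h₁₂ h₁₃ h₂₃ h₁.1 h₂.1 h₃.1
    hle₁ hle₂ hle₃ h₁.2 h₂.2 h₃.2

lemma IsEckardtPoint.reflection {B : TrilinearForm k (Fin 4 → k)} (hB : B.Represents F)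
    {p q : Fin 4 → k} (hp : B.cubic p = 0) (hq : IsEckardtPoint F (k ∙ q))
    {m : Module.Dual k (Fin 4 → k)} (hm2 : m p = 2)
    (hm : ∀ x, B.differential x p = B.differential p x * m x) :
    IsEckardtPoint F (k ∙ (q - m q • p)) := by
  have hmap := hq.map (Module.reflection hm2) fun x ↦ by
    rw [hB.eval_eq, hB.eval_eq, TrilinearForm.cubic_reflection hp hm2 hm]
  rwa [Submodule.map_span, Set.image_singleton, LinearEquiv.coe_coe,
    Module.reflection_apply] at hmap

lemma setOf_isEckardtPoint_span_pair {B : TrilinearForm k (Fin 4 → k)} (hB : B.Represents F)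
    {p q : Fin 4 → k} (hp : IsEckardtPoint F (k ∙ p)) (hq : IsEckardtPoint F (k ∙ q))
    {m : Module.Dual k (Fin 4 → k)} (hm2 : m p = 2)
    (hm : ∀ x, B.differential x p = B.differential p x * m x) (hpq : B.differential p q ≠ 0) :
    {L | IsEckardtPoint F L ∧ L ≤ Submodule.span k {p, q}} =
      {k ∙ p, k ∙ q, k ∙ (q - m q • p)} := by
  have hp' := hp.cubic_eq_zero hB
  have hq' := hq.cubic_eq_zero hB
  have hp_mem : p ∈ Submodule.span k {p, q} := Submodule.subset_span (by simp)
  have hq_mem : q ∈ Submodule.span k {p, q} := Submodule.subset_span (by simp)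
  ext L
  constructor
  · rintro ⟨hL, hLe⟩
    exact TrilinearForm.eq_span_singleton_of_cubic_eq_zero_on hp' hq' hpq (hm q) hL.1 hLe
      fun x hx ↦ hB.eval_eq x ▸ hL.vanishesOn x hx
  · rintro (rfl | rfl | rfl)
    · exact ⟨hp, (Submodule.span_singleton_le_iff_mem _ _).2 hp_mem⟩
    · exact ⟨hq, (Submodule.span_singleton_le_iff_mem _ _).2 hq_mem⟩
    · refine ⟨hq.reflection hB hp' hm2 hm, (Submodule.span_singleton_le_iff_mem _ _).2 ?_⟩
      exact Submodule.sub_mem _ hq_mem (Submodule.smul_mem _ _ hp_mem)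

end EckardtPoints

theorem stmt3_general {k : Type*} [Field k] (hk : 3 ≤ Cardinal.mk k)
    (F : MvPolynomial (Fin 4) k) (hhom : F.IsHomogeneous 3)
    (W : Submodule k (Fin 4 → k))
    (hsmooth : ∀ x ∈ W, eval x F = 0 → (∀ i, eval x (pderiv i F) = 0) → x = 0)
    (hW : Module.finrank k W = 2) (hWF : ¬ VanishesOn F W)
    (L₁ L₂ : Submodule k (Fin 4 → k)) (hne : L₁ ≠ L₂)
    (h₁ : IsEckardtPoint F L₁ ∧ L₁ ≤ W) (h₂ : IsEckardtPoint F L₂ ∧ L₂ ≤ W) :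
    {L : Submodule k (Fin 4 → k) | IsEckardtPoint F L ∧ L ≤ W}.Finite ∧
    {L : Submodule k (Fin 4 → k) | IsEckardtPoint F L ∧ L ≤ W}.ncard = 3 := by
  obtain ⟨B, hB⟩ := exists_represents_of_isHomogeneous hhom
  obtain ⟨p, hp0, rfl⟩ := exists_eq_span_singleton_of_finrank_eq_one h₁.1.1
  obtain ⟨q, hq0, rfl⟩ := exists_eq_span_singleton_of_finrank_eq_one h₂.1.1
  have hpW : p ∈ W := (Submodule.span_singleton_le_iff_mem p W).1 h₁.2
  have hqW : q ∈ W := (Submodule.span_singleton_le_iff_mem q W).1 h₂.2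
  have hindep := linearIndependent_pair_of_span_singleton_ne_s3 hp0 hq0 hne
  obtain rfl := span_pair_eq_of_finrank_eq_two_s3 hW hpW hqW hindep
  have hp := h₁.1.isStarPoint hB hk (hsmooth p hpW)
  have hq := h₂.1.isStarPoint hB hk (hsmooth q hqW)
  simp only [VanishesOn, hB.eval_eq] at hWF
  have hpq := hp.differential_apply_ne_zero hq.cubic_eq_zero hWF
  have hqp := hq.differential_apply_ne_zero hp.cubic_eq_zero (Set.pair_comm p q ▸ hWF)
  obtain ⟨m, hm2, hm⟩ := hp.exists_dual
  have hmq : m q ≠ 0 := right_ne_zero_of_mul (hm q ▸ hqp)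
  obtain ⟨hpr, hqr⟩ := span_singleton_ne_of_linearIndependent hindep hmq
  rw [setOf_isEckardtPoint_span_pair hB h₁.1 h₂.1 hm2 hm hpq]
  exact ⟨Set.toFinite _, Set.ncard_eq_three.2 ⟨_, _, _, hne, hpr, hqr, rfl⟩⟩

/-- If a projective line `ℓ` not contained in the smooth cubic
surface `V(F)` contains at least two Eckardt points of `V(F)`, then it contains
exactly three Eckardt points of `V(F)` (so `ℓ` is a trihedral line). -/
theorem stmt3 {k : Type*} [Field k] [IsAlgClosed k]
    (F : MvPolynomial (Fin 4) k) (hF0 : F ≠ 0) (hhom : F.IsHomogeneous 3)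
    (hsmooth : ∀ x : Fin 4 → k,
      eval x F = 0 → (∀ i, eval x (pderiv i F) = 0) → x = 0)
    (W : Submodule k (Fin 4 → k)) (hW : Module.finrank k W = 2)
    (hWF : ¬ VanishesOn F W)
    (L₁ L₂ : Submodule k (Fin 4 → k)) (hne : L₁ ≠ L₂)
    (h₁ : IsEckardtPoint F L₁ ∧ L₁ ≤ W) (h₂ : IsEckardtPoint F L₂ ∧ L₂ ≤ W) :
    {L : Submodule k (Fin 4 → k) | IsEckardtPoint F L ∧ L ≤ W}.Finite ∧
    {L : Submodule k (Fin 4 → k) | IsEckardtPoint F L ∧ L ≤ W}.ncard = 3 := by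
  have hk : 3 ≤ Cardinal.mk k :=
    (Cardinal.natCast_le_aleph0 (n := 3)).trans (Cardinal.aleph0_le_mk k)
  exact stmt3_general hk F hhom W (fun x _ ↦ hsmooth x) hW hWF L₁ L₂ hne h₁ h₂
end

section
/- Let F be a nonzero homogeneous polynomial of degree 3 in k[x₀,x₁,x₂,x₃] such that the cubic surface V(F) is smooth. Suppose A ∈ GL₄(k) leaves V(F) invariant, A is not a scalar matrix, and A³ is a scalar matrix (so the image of A in PGL₄(k) has order 3). Then there is no 2-dimensional k-linear subspace W ⊆ k⁴ such that F vanishes identically on W and A acts on W as multiplication by a scalar. (No automorphism of order 3 of a smooth cubic surface fixes an exceptional line pointwise.) -/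
open MvPolynomial Matrix

/-! Write the cubic as `F(x) = M(x, x, x)` with `M` trilinear, scale `A` so that it is the
identity on `W`, and let `F ∘ A = l F`. A vector `u` with `dF_x(u) = 0` for all `x ∈ W` lies in `W`:
otherwise `W`, `u` and one further vector `v` span `k⁴`, and a nontrivial zero `x ∈ W` of the
binary quadratic form `x ↦ dF_x(v)` is a singular point. Comparing `dF_x(A v)` with `l dF_x(v)` for
`x ∈ W` shows that this applies to `u = A v - l v`, so `A - l` maps into `W`.

If `l² ≠ 1` and `v ∉ W`, the `l`-eigenvector `A v - v` is a singular point. If `l = 1` and `2 ≠ 0`,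
polarizing `F ∘ A = F` shows that every nonzero `A v - v` is a singular point, so `A = 1`. Otherwise
`l = -1`, and then `A² = 1`. Hence an automorphism fixing a line of the surface pointwise has scalar
square, which excludes order `3`. -/

open Module
open QuadraticMap (polar polar_comm)

section Trilinear

variable {R V : Type*} [CommRing R] [AddCommGroup V] [Module R V]

/-- The differential at `x` of the cubic form `x ↦ M x x x`. The trilinear map `M` is not assumed
to be symmetric, so that every cubic form arises in all characteristics. -/
def cubicDifferential (M : V →ₗ[R] V →ₗ[R] V →ₗ[R] R) (x : V) : V →ₗ[R] R :=
  M x x + (M x).flip x + (M.flip x).flip x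

/-- Smoothness of the hypersurface `M x x x = 0` in the projective space of `V`: it has no
singular point rational over the base ring. -/
def IsSmoothCubic (M : V →ₗ[R] V →ₗ[R] V →ₗ[R] R) : Prop :=
  ∀ x, M x x x = 0 → (∀ v, cubicDifferential M x v = 0) → x = 0

variable (M : V →ₗ[R] V →ₗ[R] V →ₗ[R] R)

theorem cubicDifferential_apply (x v : V) :
    cubicDifferential M x v = M x x v + M x v x + M v x x := rfl

theorem cubicDifferential_zero_left (v : V) : cubicDifferential M 0 v = 0 := by
  simp [cubicDifferential_apply]

theorem cubicDifferential_smul_left (c : R) (x v : V) :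
    cubicDifferential M (c • x) v = c ^ 2 * cubicDifferential M x v := by
  simp only [cubicDifferential_apply, map_smul, LinearMap.smul_apply, smul_eq_mul]
  ring

theorem trilinear_diag_add_smul (x v : V) (t : R) :
    M (x + t • v) (x + t • v) (x + t • v) =
      M x x x + cubicDifferential M x v * t + cubicDifferential M v x * t ^ 2 +
        M v v v * t ^ 3 := by
  simp only [map_add, map_smul, LinearMap.add_apply, LinearMap.smul_apply, smul_add, smul_eq_mul,
    cubicDifferential_apply]
  ring

theorem polar_cubicDifferential_apply (x y z : V) :
    polar (cubicDifferential M) x y z =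
      M x y z + M y x z + M x z y + M y z x + M z x y + M z y x := by
  simp only [polar, LinearMap.sub_apply, cubicDifferential_apply, map_add, LinearMap.add_apply]
  ring

theorem polar_cubicDifferential_self (x z : V) :
    polar (cubicDifferential M) x x z = 2 * cubicDifferential M x z := by
  rw [polar_cubicDifferential_apply, cubicDifferential_apply]
  ring

theorem cubicDifferential_smul_add_smul (s t : R) (x y v : V) :
    cubicDifferential M (s • x + t • y) v =
      cubicDifferential M x v * s ^ 2 + polar (cubicDifferential M) x y v * (s * t) +
        cubicDifferential M y v * t ^ 2 := by
  simp only [cubicDifferential_apply, map_add, map_smul, LinearMap.add_apply, LinearMap.smul_apply,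
    smul_add, smul_eq_mul, polar_cubicDifferential_apply]
  ring

end Trilinear

section Domain

variable {R V : Type*} [CommRing R] [IsDomain R] [AddCommGroup V] [Module R V]
  {M : V →ₗ[R] V →ₗ[R] V →ₗ[R] R} {W : Submodule R V} {A : V →ₗ[R] V} {l : R}

theorem trilinear_diag_eq_zero_of_map_eq_smul (hA : ∀ x, M (A x) (A x) (A x) = l * M x x x)
    (hl : l ≠ 0) (hl2 : l ^ 2 ≠ 1) {u : V} (hu : A u = l • u) : M u u u = 0 := by
  have h := hA u
  simp only [hu, map_smul, LinearMap.smul_apply, smul_eq_mul] at h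
  have h0 : l * (l ^ 2 - 1) * M u u u = 0 := by linear_combination h
  exact (mul_eq_zero.1 h0).resolve_left (mul_ne_zero hl (sub_ne_zero.2 hl2))

variable [Infinite R]

theorem linear_coeff_eq_zero_of_forall_cubic_eq_zero {a b c d : R}
    (h : ∀ t : R, a + b * t + c * t ^ 2 + d * t ^ 3 = 0) : b = 0 := by
  have hzero : (⟨d, c, b, a⟩ : Cubic R).toPoly = 0 := Polynomial.funext fun t => by
    simp only [Cubic.toPoly, Polynomial.eval_add, Polynomial.eval_mul, Polynomial.eval_C,
      Polynomial.eval_pow, Polynomial.eval_X, Polynomial.eval_zero]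
    linear_combination h t
  exact congrArg Cubic.c ((Cubic.toPoly_eq_zero_iff _).1 hzero)

theorem cubicDifferential_eq_zero_of_mem (hW : ∀ x ∈ W, M x x x = 0) {x v : V} (hx : x ∈ W)
    (hv : v ∈ W) : cubicDifferential M x v = 0 :=
  linear_coeff_eq_zero_of_forall_cubic_eq_zero fun t => by
    rw [← trilinear_diag_add_smul]
    exact hW _ (W.add_mem hx (W.smul_mem t hv))

theorem polar_cubicDifferential_eq_zero_of_mem (hW : ∀ x ∈ W, M x x x = 0) {x y z : V}
    (hx : x ∈ W) (hy : y ∈ W) (hz : z ∈ W) : polar (cubicDifferential M) x y z = 0 := by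
  simp only [polar, LinearMap.sub_apply,
    cubicDifferential_eq_zero_of_mem hW (W.add_mem hx hy) hz,
    cubicDifferential_eq_zero_of_mem hW hx hz, cubicDifferential_eq_zero_of_mem hW hy hz, sub_zero]

theorem cubicDifferential_map (hA : ∀ x, M (A x) (A x) (A x) = l * M x x x) (x v : V) :
    cubicDifferential M (A x) (A v) = l * cubicDifferential M x v := by
  rw [← sub_eq_zero]
  refine linear_coeff_eq_zero_of_forall_cubic_eq_zero
    (a := M (A x) (A x) (A x) - l * M x x x)
    (c := cubicDifferential M (A v) (A x) - l * cubicDifferential M v x)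
    (d := M (A v) (A v) (A v) - l * M v v v) fun t => ?_
  have h := hA (x + t • v)
  rw [map_add, map_smul, trilinear_diag_add_smul, trilinear_diag_add_smul] at h
  linear_combination h

theorem polar_cubicDifferential_map (hA : ∀ x, M (A x) (A x) (A x) = l * M x x x) (x y z : V) :
    polar (cubicDifferential M) (A x) (A y) (A z) = l * polar (cubicDifferential M) x y z := by
  simp only [polar, LinearMap.sub_apply, ← map_add, cubicDifferential_map hA]
  ring

theorem eq_zero_of_map_eq_zero (hM : IsSmoothCubic M) (hl : l ≠ 0)
    (hA : ∀ x, M (A x) (A x) (A x) = l * M x x x) {x : V} (hx : A x = 0) : x = 0 := by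
  refine hM x ((mul_eq_zero_iff_left hl).1 ?_) fun v => (mul_eq_zero_iff_left hl).1 ?_
  · rw [← hA, hx, map_zero]
  · rw [← cubicDifferential_map hA, hx, cubicDifferential_zero_left]

theorem cubicDifferential_eq_zero_of_map_eq_smul
    (hA : ∀ x, M (A x) (A x) (A x) = l * M x x x) (hl : l ≠ 0) {m : R} (hlm : l * m ≠ 1) {u w : V}
    (hu : A u = l • u) (hw : A w = m • w) : cubicDifferential M u w = 0 := by
  have h := cubicDifferential_map hA u w
  rw [hu, hw, map_smul, cubicDifferential_smul_left, smul_eq_mul] at h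
  have h0 : l * (l * m - 1) * cubicDifferential M u w = 0 := by linear_combination h
  exact (mul_eq_zero.1 h0).resolve_left (mul_ne_zero hl (sub_ne_zero.2 hlm))

theorem polar_cubicDifferential_map_sub_add_eq_zero (hW : ∀ x ∈ W, M x x x = 0)
    (hA : ∀ x, M (A x) (A x) (A x) = M x x x) (hAW : ∀ x ∈ W, A x = x)
    (hrange : ∀ v, A v - v ∈ W) {w : V} (hw : w ∈ W) (y z : V) :
    polar (cubicDifferential M) w (A y - y) z + polar (cubicDifferential M) w (A z - z) y = 0 := by
  have hinv := polar_cubicDifferential_map (l := 1) (fun x => (hA x).trans (one_mul _).symm) w y z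
  have hline := polar_cubicDifferential_eq_zero_of_mem hW hw (hrange y) (hrange z)
  simp only [hAW w hw, one_mul, polar_cubicDifferential_apply, map_sub, LinearMap.sub_apply]
    at hinv hline ⊢
  linear_combination hinv - hline

theorem map_eq_self_of_two_ne_zero (hM : IsSmoothCubic M) (hW : ∀ x ∈ W, M x x x = 0)
    (hA : ∀ x, M (A x) (A x) (A x) = M x x x) (hAW : ∀ x ∈ W, A x = x)
    (hrange : ∀ v, A v - v ∈ W) (h2 : (2 : R) ≠ 0) (u : V) : A u = u := by
  rw [← sub_eq_zero]
  refine hM _ (hW _ (hrange u)) fun z => ?_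
  have hu := polar_cubicDifferential_map_sub_add_eq_zero hW hA hAW hrange (hrange u) u z
  have hz := polar_cubicDifferential_map_sub_add_eq_zero hW hA hAW hrange (hrange z) u u
  rw [polar_cubicDifferential_self] at hu
  rw [polar_comm] at hz
  have hfour : 2 * 2 * cubicDifferential M (A u - u) z = 0 := by
    linear_combination 2 * hu - hz
  exact (mul_eq_zero.1 hfour).resolve_left (mul_ne_zero h2 h2)

end Domain

theorem map_map_eq_of_forall_map_sub_smul_mem {R V : Type*} [CommRing R] [AddCommGroup V]
    [Module R V] {W : Submodule R V} {A : V →ₗ[R] V} {l : R} (hAW : ∀ x ∈ W, A x = x)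
    (hrange : ∀ v, A v - l • v ∈ W) (v : V) : A (A v) = A v + l • (A v - v) := by
  have h := hAW _ (hrange v)
  rw [map_sub, map_smul, sub_eq_iff_eq_add] at h
  rw [h]
  module

theorem exists_ne_zero_binary_quadratic_eq_zero {k : Type*} [Field k] [IsAlgClosed k] (a b c : k) :
    ∃ s t : k, (s, t) ≠ 0 ∧ a * s ^ 2 + b * (s * t) + c * t ^ 2 = 0 := by
  by_cases ha : a = 0
  · exact ⟨1, 0, by simp, by simp [ha]⟩
  · obtain ⟨s, hs⟩ := IsAlgClosed.exists_root
      (Polynomial.C a * Polynomial.X ^ 2 + Polynomial.C b * Polynomial.X + Polynomial.C c)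
      (by rw [Polynomial.degree_quadratic ha]; exact two_ne_zero)
    exact ⟨s, 1, by simp, by simpa [Polynomial.IsRoot] using hs⟩

section Field

variable {k V : Type*} [Field k] [AddCommGroup V] [Module k V]
  {M : V →ₗ[k] V →ₗ[k] V →ₗ[k] k} {W : Submodule k V} {A : V →ₗ[k] V} {l : k}

theorem exists_sup_span_singleton_eq_top [FiniteDimensional k V]
    (hW : finrank k V ≤ finrank k W + 1) : ∃ v, W ⊔ Submodule.span k {v} = ⊤ := by
  by_cases htop : W = ⊤
  · exact ⟨0, by simp [htop]⟩
  · obtain ⟨v, -, hv⟩ := SetLike.exists_of_lt (lt_top_iff_ne_top.2 htop)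
    refine ⟨v, Submodule.eq_top_of_finrank_eq (le_antisymm (Submodule.finrank_le _) ?_)⟩
    rwa [Submodule.finrank_sup_span_singleton hv]

theorem exists_ne_zero_cubicDifferential_eq_zero [IsAlgClosed k]
    (M : V →ₗ[k] V →ₗ[k] V →ₗ[k] k) (hW : 1 < finrank k W) (v : V) :
    ∃ x ∈ W, x ≠ 0 ∧ cubicDifferential M x v = 0 := by
  have : Nontrivial W := Module.nontrivial_of_finrank_pos (zero_lt_one.trans hW)
  obtain ⟨x, hx⟩ := exists_ne (0 : W)
  obtain ⟨y, hxy⟩ := exists_linearIndependent_pair_of_one_lt_finrank hW hx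
  obtain ⟨s, t, hst, hzero⟩ := exists_ne_zero_binary_quadratic_eq_zero (cubicDifferential M x v)
    (polar (cubicDifferential M) (x : V) y v) (cubicDifferential M y v)
  refine ⟨s • x + t • y, (s • x + t • y).2, fun h => hst ?_, ?_⟩
  · obtain ⟨hs, ht⟩ := LinearIndependent.pair_iff.1 hxy s t (Subtype.ext h)
    rw [hs, ht, Prod.mk_zero_zero]
  · rw [cubicDifferential_smul_add_smul, hzero]

theorem mem_of_forall_cubicDifferential_eq_zero [IsAlgClosed k] (hV : finrank k V = 4)
    (hM : IsSmoothCubic M) (hWdim : finrank k W = 2) (hW : ∀ x ∈ W, M x x x = 0) {u : V}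
    (hu : ∀ x ∈ W, cubicDifferential M x u = 0) : u ∈ W := by
  by_contra huW
  have : FiniteDimensional k V := Module.finite_of_finrank_eq_succ hV
  have : Infinite k := IsAlgClosed.instInfinite
  obtain ⟨v, hv⟩ := exists_sup_span_singleton_eq_top (W := W ⊔ Submodule.span k {u})
    (by rw [Submodule.finrank_sup_span_singleton huW, hWdim, hV])
  obtain ⟨x, hx, hx0, hxv⟩ :=
    exists_ne_zero_cubicDifferential_eq_zero M (by rw [hWdim]; exact one_lt_two) v
  refine hx0 (hM x (hW x hx) fun z => ?_)
  suffices ⊤ ≤ LinearMap.ker (cubicDifferential M x) from this trivial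
  rw [← hv, sup_le_iff, sup_le_iff, Submodule.span_singleton_le_iff_mem,
    Submodule.span_singleton_le_iff_mem]
  exact ⟨⟨fun w hw => cubicDifferential_eq_zero_of_mem hW hx hw, hu x hx⟩, hxv⟩

theorem map_sub_smul_mem_of_forall_mem_map_eq_self [IsAlgClosed k] (hV : finrank k V = 4)
    (hM : IsSmoothCubic M) (hWdim : finrank k W = 2) (hW : ∀ x ∈ W, M x x x = 0)
    (hA : ∀ x, M (A x) (A x) (A x) = l * M x x x) (hAW : ∀ x ∈ W, A x = x) (v : V) :
    A v - l • v ∈ W := by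
  have : Infinite k := IsAlgClosed.instInfinite
  refine mem_of_forall_cubicDifferential_eq_zero hV hM hWdim hW fun x hx => ?_
  have h := cubicDifferential_map hA x v
  rw [hAW x hx] at h
  rw [map_sub, map_smul, smul_eq_mul, h, sub_self]

theorem sq_eq_one_of_forall_map_sub_smul_mem [Infinite k] (hM : IsSmoothCubic M) (hWtop : W ≠ ⊤)
    (hl : l ≠ 0) (hA : ∀ x, M (A x) (A x) (A x) = l * M x x x) (hAW : ∀ x ∈ W, A x = x)
    (hrange : ∀ v, A v - l • v ∈ W) : l ^ 2 = 1 := by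
  by_contra hl2
  have hl1 : l ≠ 1 := by rintro rfl; exact hl2 (one_pow 2)
  have hl1' : l - 1 ≠ 0 := sub_ne_zero.2 hl1
  have heigen (v : V) : A (A v - v) = l • (A v - v) := by
    rw [map_sub, map_map_eq_of_forall_map_sub_smul_mem hAW hrange, add_sub_cancel_left]
  have hdecomp (v : V) : (l - 1) • v = (A v - v) - (A v - l • v) := by module
  obtain ⟨v, -, hvW⟩ := SetLike.exists_of_lt (lt_top_iff_ne_top.2 hWtop)
  have hv : A v - v ≠ 0 := fun h => hvW <| (W.smul_mem_iff hl1').1 <| by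
    rw [hdecomp, h, zero_sub]
    exact W.neg_mem (hrange v)
  refine hv (hM _ (trilinear_diag_eq_zero_of_map_eq_smul hA hl hl2 (heigen v)) fun z => ?_)
  have hline : cubicDifferential M (A v - v) (A z - l • z) = 0 :=
    cubicDifferential_eq_zero_of_map_eq_smul hA hl (m := 1) (by rwa [mul_one]) (heigen v)
      (by rw [hAW _ (hrange z), one_smul])
  have heigenspace : cubicDifferential M (A v - v) (A z - z) = 0 :=
    cubicDifferential_eq_zero_of_map_eq_smul hA hl (by rwa [← sq]) (heigen v) (heigen z)
  have hz : (l - 1) * cubicDifferential M (A v - v) z = 0 := by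
    rw [← smul_eq_mul, ← map_smul, hdecomp, map_sub, heigenspace, hline, sub_zero]
  exact (mul_eq_zero.1 hz).resolve_left hl1'

theorem involutive_of_forall_mem_map_eq_self [IsAlgClosed k] (hV : finrank k V = 4)
    (hM : IsSmoothCubic M) (hWdim : finrank k W = 2) (hW : ∀ x ∈ W, M x x x = 0) (hl : l ≠ 0)
    (hA : ∀ x, M (A x) (A x) (A x) = l * M x x x) (hAW : ∀ x ∈ W, A x = x) :
    Function.Involutive A := by
  have : Infinite k := IsAlgClosed.instInfinite
  have hrange := map_sub_smul_mem_of_forall_mem_map_eq_self hV hM hWdim hW hA hAW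
  have hWtop : W ≠ ⊤ := by
    rintro rfl
    rw [finrank_top] at hWdim
    omega
  intro v
  by_cases hneg : l = -1
  · rw [map_map_eq_of_forall_map_sub_smul_mem hAW hrange, hneg]
    module
  · obtain rfl : l = 1 := (sq_eq_one_iff.1
      (sq_eq_one_of_forall_map_sub_smul_mem hM hWtop hl hA hAW hrange)).resolve_right hneg
    have h2 : (2 : k) ≠ 0 := fun h => hneg (by linear_combination h)
    simp only [one_smul, one_mul] at hrange hA
    have hid := map_eq_self_of_two_ne_zero hM hW hA hAW hrange h2
    rw [hid, hid]

theorem map_map_eq_sq_smul_of_forall_mem_map_eq_smul [IsAlgClosed k] (hV : finrank k V = 4)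
    (hM : IsSmoothCubic M) (hWdim : finrank k W = 2) (hW : ∀ x ∈ W, M x x x = 0) (hl : l ≠ 0)
    (hA : ∀ x, M (A x) (A x) (A x) = l * M x x x) {c : k} (hAW : ∀ x ∈ W, A x = c • x) (x : V) :
    A (A x) = c ^ 2 • x := by
  have : Infinite k := IsAlgClosed.instInfinite
  have hc : c ≠ 0 := by
    rintro rfl
    obtain ⟨w, hw, hw0⟩ := W.exists_mem_ne_zero_of_ne_bot (by rintro rfl; simp at hWdim)
    exact hw0 (eq_zero_of_map_eq_zero hM hl hA (by rw [hAW w hw, zero_smul]))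
  have hinvol : (c⁻¹ • A) ((c⁻¹ • A) x) = x :=
    involutive_of_forall_mem_map_eq_self (l := c⁻¹ ^ 3 * l) hV hM hWdim hW
      (mul_ne_zero (pow_ne_zero 3 (inv_ne_zero hc)) hl)
      (fun x => by
        simp only [LinearMap.smul_apply, map_smul, smul_eq_mul, hA]
        ring)
      (fun x hx => by rw [LinearMap.smul_apply, hAW x hx, inv_smul_smul₀ hc]) x
  rw [LinearMap.smul_apply, LinearMap.smul_apply, map_smul, inv_smul_eq_iff₀ hc,
    inv_smul_eq_iff₀ hc, smul_smul, ← sq] at hinvol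
  exact hinvol

end Field

section MvPolynomial

open scoped Pointwise in
theorem homogeneousSubmodule_eq_span_range_X_pow {σ R : Type*} [CommSemiring R] (n : ℕ) :
    homogeneousSubmodule σ R n = Submodule.span R (Set.range X ^ n) := by
  rw [← homogeneousSubmodule_one_pow, homogeneousSubmodule_one_eq_span_X, Submodule.span_pow]

theorem eval_pderiv_X {σ R : Type*} [DecidableEq σ] [CommSemiring R] (x : σ → R) (i a : σ) :
    eval x (pderiv i (X a : MvPolynomial σ R)) = (Pi.single i 1 : σ → R) a := by
  rcases eq_or_ne i a with rfl | hia
  · simp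
  · simp [pderiv_X_of_ne hia.symm, hia.symm]

open scoped Pointwise in
theorem exists_trilinear_of_isHomogeneous_three {σ R : Type*} [DecidableEq σ] [CommRing R]
    {F : MvPolynomial σ R} (hF : F.IsHomogeneous 3) :
    ∃ M : (σ → R) →ₗ[R] (σ → R) →ₗ[R] (σ → R) →ₗ[R] R,
      (∀ x, eval x F = M x x x) ∧
      ∀ x i, eval x (pderiv i F) = cubicDifferential M x (Pi.single i 1) := by
  rw [← mem_homogeneousSubmodule, homogeneousSubmodule_eq_span_range_X_pow] at hF
  induction hF using Submodule.span_induction with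
  | mem F hF =>
    rw [pow_three] at hF
    obtain ⟨_, ⟨a, rfl⟩, _, ⟨_, ⟨b, rfl⟩, _, ⟨c, rfl⟩, rfl⟩, rfl⟩ := hF
    refine ⟨(LinearMap.proj a).smulRight ((LinearMap.proj b).smulRight (LinearMap.proj c)),
      fun x => by simp, fun x i => ?_⟩
    simp only [pderiv_mul, map_add, map_mul, eval_X, eval_pderiv_X, cubicDifferential_apply,
      LinearMap.smulRight_apply, LinearMap.proj_apply, LinearMap.smul_apply, smul_eq_mul]
    ring
  | zero => exact ⟨0, by simp, by simp [cubicDifferential_apply]⟩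
  | add F G _ _ hF hG =>
    obtain ⟨M, hM, hM'⟩ := hF
    obtain ⟨N, hN, hN'⟩ := hG
    refine ⟨M + N, by simp [hM, hN], fun x i => ?_⟩
    simp only [map_add, hM', hN', cubicDifferential_apply, LinearMap.add_apply]
    ring
  | smul r F _ hF =>
    obtain ⟨M, hM, hM'⟩ := hF
    refine ⟨r • M, by simp [hM], fun x i => ?_⟩
    simp only [Derivation.map_smul, smul_eval, hM', cubicDifferential_apply, LinearMap.smul_apply,
      smul_eq_mul]
    ring

theorem eval_substMatrix {k : Type*} [Field k] (A : Matrix (Fin 4) (Fin 4) k)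
    (F : MvPolynomial (Fin 4) k) (x : Fin 4 → k) :
    eval x (substMatrix A F) = eval (A *ᵥ x) F := by
  rw [substMatrix, ← aeval_eq_eval, ← aeval_eq_eval, comp_aeval_apply]
  simp only [map_sum, map_mul, aeval_X, algHom_C, Algebra.algebraMap_self, RingHom.id_apply]
  rfl

theorem LeavesInvariant.exists_eval_mulVec_eq {k : Type*} [Field k]
    {A : Matrix (Fin 4) (Fin 4) k} {F : MvPolynomial (Fin 4) k} (h : LeavesInvariant A F) :
    ∃ l : k, l ≠ 0 ∧ ∀ x, eval (A *ᵥ x) F = l * eval x F := by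
  obtain ⟨l, hl⟩ := h
  exact ⟨l, l.ne_zero, fun x => by rw [← eval_substMatrix, hl, smul_eval]⟩

end MvPolynomial

theorem exists_eq_smul_one_of_sq_of_cube {k B : Type*} [Field k] [Ring B] [Algebra k B] {x : B}
    (hx : IsUnit x) {a b : k} (hsq : x ^ 2 = a • (1 : B)) (hcube : x ^ 3 = b • (1 : B)) :
    ∃ c : k, x = c • (1 : B) := by
  have hax : a • x = b • (1 : B) := by
    rw [← hcube, pow_succ, hsq, smul_mul_assoc, one_mul]
  by_cases ha : a = 0
  · have hzero : IsUnit (0 : B) := by simpa only [hsq, ha, zero_smul] using hx.pow 2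
    have : Subsingleton B := subsingleton_of_zero_eq_one (isUnit_zero_iff.1 hzero)
    exact ⟨0, Subsingleton.elim _ _⟩
  · exact ⟨a⁻¹ * b, by rw [mul_smul, ← hax, inv_smul_smul₀ ha]⟩

theorem stmt5_general {k : Type*} [Field k] [IsAlgClosed k]
    (F : MvPolynomial (Fin 4) k) (hhom : F.IsHomogeneous 3)
    (hsmooth : ∀ x : Fin 4 → k,
      eval x F = 0 → (∀ i, eval x (pderiv i F) = 0) → x = 0)
    (A : Matrix (Fin 4) (Fin 4) k) (hinv : LeavesInvariant A F)
    (W : Submodule k (Fin 4 → k)) (hline : IsLineIn F W)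
    (c : k) (hc : ∀ x ∈ W, A *ᵥ x = c • x) :
    A ^ 2 = c ^ 2 • (1 : Matrix (Fin 4) (Fin 4) k) := by
  obtain ⟨M, hM, hM'⟩ := exists_trilinear_of_isHomogeneous_three hhom
  obtain ⟨l, hl, hA⟩ := hinv.exists_eval_mulVec_eq
  have hMsmooth : IsSmoothCubic M := fun x hx hdx =>
    hsmooth x ((hM x).trans hx) fun i => (hM' x i).trans (hdx _)
  have hsq := map_map_eq_sq_smul_of_forall_mem_map_eq_smul (A := A.mulVecLin) (finrank_fin_fun k)
    hMsmooth hline.1 (fun x hx => (hM x).symm.trans (hline.2 x hx)) hl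
    (fun x => by simpa only [hM, Matrix.mulVecLin_apply] using hA x) hc
  refine Matrix.ext_of_mulVec_single fun i => ?_
  rw [Matrix.smul_mulVec, Matrix.one_mulVec, sq, ← Matrix.mulVec_mulVec]
  exact hsq (Pi.single i 1)

/-- No projective automorphism of order `3` of a smooth cubic
surface fixes an exceptional line pointwise: if `A ∈ GL₄(k)` leaves `V(F)`
invariant, `A` is not scalar but `A³` is scalar, then there is no
2-dimensional subspace `W ⊆ k⁴` on which `F` vanishes identically and on
which `A` acts as multiplication by a scalar. -/
theorem stmt5 {k : Type*} [Field k] [IsAlgClosed k]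
    (F : MvPolynomial (Fin 4) k) (hF0 : F ≠ 0) (hhom : F.IsHomogeneous 3)
    (hsmooth : ∀ x : Fin 4 → k,
      eval x F = 0 → (∀ i, eval x (pderiv i F) = 0) → x = 0)
    (A : Matrix (Fin 4) (Fin 4) k) (hA : IsUnit A.det)
    (hinv : LeavesInvariant A F)
    (hns : ¬ ∃ c : k, A = c • (1 : Matrix (Fin 4) (Fin 4) k))
    (h3 : ∃ c : k, A ^ 3 = c • (1 : Matrix (Fin 4) (Fin 4) k)) :
    ¬ ∃ W : Submodule k (Fin 4 → k),
        Module.finrank k W = 2 ∧ VanishesOn F W ∧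
        ∃ c : k, ∀ x ∈ W, A.mulVec x = c • x := by
  rintro ⟨W, hdim, hW, c, hc⟩
  have hsq := stmt5_general F hhom hsmooth A hinv W ⟨hdim, hW⟩ c hc
  obtain ⟨d, hcube⟩ := h3
  exact hns (exists_eq_smul_one_of_sq_of_cube ((isUnit_iff_isUnit_det A).2 hA) hsq hcube)
end

section
/- Assume char k = 2 and let F be a homogeneous polynomial of degree 3 in k[x₀,x₁,x₂,x₃]. For distinct indices i < j < l, let a_{ijl} denote the coefficient of the monomial xᵢxⱼx_l in F, and set v = (a₁₂₃, a₀₂₃, a₀₁₃, a₀₁₂) ∈ k⁴. Let H(F) be the 4×4 Hessian matrix whose (i,j) entry is ∂²F/∂xᵢ∂xⱼ ∈ k[x₀,…,x₃]. Then: (i) for every y ∈ k⁴, the evaluated matrix H(F)(y) satisfies H(F)(y)·v = 0; (ii) the polar polynomial Σᵢ vᵢ·∂F/∂xᵢ is the square of a homogeneous linear polynomial; and (iii) if H(F) is not identically the zero matrix, then every w ∈ k⁴ with H(F)(y)·w = 0 for all y ∈ k⁴ is a scalar multiple of v. -/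
open MvPolynomial Matrix

/-- The vector `v = (a₁₂₃, a₀₂₃, a₀₁₃, a₀₁₂)` of coefficients of the squarefree
cubic monomials of `F`: `v i` is the coefficient of the product of the three
variables other than `xᵢ`. -/
noncomputable def tripleCoeffVec {k : Type*} [Field k]
    (F : MvPolynomial (Fin 4) k) : Fin 4 → k :=
  fun i => F.coeff (∑ j ∈ Finset.univ.erase i, Finsupp.single j 1)

/-- The Hessian matrix of `F`, an entrywise-polynomial `4 × 4` matrix whose
`(i,j)` entry is `∂²F/∂xᵢ∂xⱼ`, evaluated at the point `y ∈ k⁴`. -/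
noncomputable def hessianAt {k : Type*} [Field k]
    (F : MvPolynomial (Fin 4) k) (y : Fin 4 → k) : Matrix (Fin 4) (Fin 4) k :=
  Matrix.of fun i j => eval y (pderiv i (pderiv j F))

/-!
In characteristic 2 the third polarization `(y, u, w) ↦ uᵀ H(F)(y) w` of a cubic form is not only
symmetric but alternating, since `∂²/∂xᵢ² = 0`. An alternating trilinear form on `k⁴` is the
contraction of the volume form with a vector, and comparing coefficients identifies that vector
as `v`: `uᵀ H(F)(y) w = det (y, u, v, w)`. Hence `H(F)(y) v = 0`, and a vector `w` killed by every
`H(F)(y)` is proportional to `v` when `v ≠ 0`. The polar `∑ vᵢ ∂F/∂xᵢ` has gradient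
`H(F) v = 0`, so only squares of variables occur in it, and over a perfect field it is a square.
-/

section PthPowers

variable {σ R : Type*} [CommRing R] {p : ℕ} [Fact p.Prime] [CharP R p]

theorem dvd_of_mem_support_of_pderiv_eq_zero {P : MvPolynomial σ R} (hP : ∀ i, pderiv i P = 0)
    {d : σ →₀ ℕ} (hd : d ∈ P.support) (i : σ) : p ∣ d i := by
  by_contra hdvd
  have hle : Finsupp.single i 1 ≤ d := by
    rw [Finsupp.single_le_iff, Nat.one_le_iff_ne_zero]
    exact fun h ↦ hdvd (h ▸ dvd_zero p)
  have hcoeff : coeff d P * (d i : R) = 0 := by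
    have hpos : 1 ≤ d i := Finsupp.single_le_iff.mp hle
    have h := congrArg (coeff (d - Finsupp.single i 1)) (hP i)
    rw [coeff_pderiv, tsub_add_cancel_of_le hle, coeff_zero] at h
    simpa [Nat.cast_sub hpos] using h
  have hunit : IsUnit (d i : R) := (CharP.isUnit_natCast_iff Fact.out).mpr hdvd
  exact mem_support_iff.mp hd (hunit.mul_left_eq_zero.mp hcoeff)

theorem exists_isHomogeneous_pow_eq_of_pderiv_eq_zero [PerfectRing R p] {P : MvPolynomial σ R}
    {n : ℕ} (hhom : P.IsHomogeneous (p * n)) (hP : ∀ i, pderiv i P = 0) :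
    ∃ Q : MvPolynomial σ R, Q.IsHomogeneous n ∧ P = Q ^ p := by
  have hp : p.Prime := Fact.out
  let divExp (d : σ →₀ ℕ) : σ →₀ ℕ := d.mapRange (· / p) (Nat.zero_div p)
  have smul_divExp {d : σ →₀ ℕ} (hd : d ∈ P.support) : p • divExp d = d := by
    ext i
    simp [divExp, Nat.mul_div_cancel' (dvd_of_mem_support_of_pderiv_eq_zero hP hd i)]
  refine ⟨∑ d ∈ P.support, monomial (divExp d) ((frobeniusEquiv R p).symm (coeff d P)),
    IsHomogeneous.sum _ _ _ fun d hd ↦ isHomogeneous_monomial _ ?_, ?_⟩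
  · have hdeg : d.degree = p * n := by
      by_contra h
      exact mem_support_iff.mp hd (hhom.coeff_eq_zero h)
    apply Nat.eq_of_mul_eq_mul_left hp.pos
    rw [← smul_eq_mul, ← map_nsmul, smul_divExp hd, hdeg]
  · rw [sum_pow_char]
    conv_lhs => rw [P.as_sum]
    refine Finset.sum_congr rfl fun d hd ↦ ?_
    rw [monomial_pow, smul_divExp hd, frobeniusEquiv_symm_pow_p]

end PthPowers

section Coefficients

variable {σ R : Type*}

theorem eq_sum_C_coeff_mul_X_of_isHomogeneous_one [CommSemiring R] [Fintype σ]
    {G : MvPolynomial σ R} (hG : G.IsHomogeneous 1) :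
    G = ∑ l, C (coeff (Finsupp.single l 1) G) * X l := by
  have pderiv_eq (l : σ) : pderiv l G = C (coeff (Finsupp.single l 1) G) := by
    have hconst : (pderiv l G).totalDegree = 0 :=
      (totalDegree_zero_iff_isHomogeneous σ).mpr hG.pderiv
    rw [totalDegree_eq_zero_iff_eq_C.mp hconst, coeff_pderiv]
    simp
  have euler := hG.sum_X_mul_pderiv
  simp only [pderiv_eq, one_smul] at euler
  simpa only [mul_comm] using euler.symm

theorem coeff_single_pderiv_pderiv_of_ne [CommSemiring R] (F : MvPolynomial σ R) {l i j : σ}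
    (hli : l ≠ i) (hlj : l ≠ j) (hij : i ≠ j) :
    coeff (Finsupp.single l 1) (pderiv i (pderiv j F)) =
      coeff (Finsupp.single l 1 + Finsupp.single i 1 + Finsupp.single j 1) F := by
  simp [coeff_pderiv, hli, hlj, hij]

theorem coeff_single_pderiv_pderiv_eq_zero [CommSemiring R] [CharP R 2] (F : MvPolynomial σ R)
    {l i j : σ} (h : l = i ∨ l = j ∨ i = j) :
    coeff (Finsupp.single l 1) (pderiv i (pderiv j F)) = 0 := by
  have htwo : (1 + 1 : R) = 0 := CharTwo.add_self_eq_zero 1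
  rw [coeff_pderiv, coeff_pderiv]
  by_cases hli : l = i
  · simp [hli, htwo]
  · rcases h with h | rfl | rfl
    · exact absurd h hli
    · simp [Ne.symm hli, htwo]
    · simp [hli, htwo]

end Coefficients

section Determinants

variable {n R : Type*} [Fintype n] [DecidableEq n] [CommRing R]

theorem det_of_eq_sum_mul_det_update_single (A : n → n → R) (r : n) :
    det (of A) = ∑ j, A r j * det (of (Function.update A r (Pi.single j 1))) := by
  simp only [det_eq_sum_mul_adjugate_row (of A) r, adjugate_apply]
  rfl

theorem det_updateRow_one (r : n) (v : n → R) : ((1 : Matrix n n R).updateRow r v).det = v r := by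
  rw [← cramer_transpose_apply, transpose_one, cramer_one]
  rfl

theorem det_updateRow_submatrix_one (σ : Equiv.Perm n) (r : n) (v : n → R) :
    (((1 : Matrix n n R).submatrix σ id).updateRow r v).det = Equiv.Perm.sign σ * v (σ r) := by
  have h := updateRow_submatrix_equiv (1 : Matrix n n R) r v σ (Equiv.refl n)
  rw [Equiv.coe_refl] at h
  rw [h, det_permute]
  congr 1
  exact det_updateRow_one (σ r) v

theorem exists_det_vec4_ne_zero_of_linearIndependent {K : Type*} [Field K] {v w : Fin 4 → K}
    (h : LinearIndependent K ![v, w]) : ∃ y u : Fin 4 → K, det (of ![y, u, v, w]) ≠ 0 := by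
  obtain ⟨u, hu⟩ := exists_linearIndependent_cons_of_lt_finrank h (by simp)
  obtain ⟨y, hy⟩ := exists_linearIndependent_cons_of_lt_finrank hu (by simp)
  refine ⟨y, u, ((isUnit_iff_isUnit_det _).mp ?_).ne_zero⟩
  exact linearIndependent_rows_iff_isUnit.mp hy

theorem det_vec4_eq_sum_fst (y u v w : Fin 4 → R) :
    det (of ![y, u, v, w]) = ∑ l, y l * det (of ![Pi.single l 1, u, v, w]) := by
  have update_row (x : Fin 4 → R) : Function.update ![y, u, v, w] 0 x = ![x, u, v, w] := by
    ext a
    fin_cases a <;> rfl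
  simp only [det_of_eq_sum_mul_det_update_single ![y, u, v, w] 0, update_row]
  rfl

theorem det_vec4_eq_sum_snd (y u v w : Fin 4 → R) :
    det (of ![y, u, v, w]) = ∑ i, u i * det (of ![y, Pi.single i 1, v, w]) := by
  have update_row (x : Fin 4 → R) : Function.update ![y, u, v, w] 1 x = ![y, x, v, w] := by
    ext a
    fin_cases a <;> rfl
  simp only [det_of_eq_sum_mul_det_update_single ![y, u, v, w] 1, update_row]
  rfl

theorem det_vec4_eq_sum_last (y u v w : Fin 4 → R) :
    det (of ![y, u, v, w]) = ∑ j, w j * det (of ![y, u, v, Pi.single j 1]) := by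
  have update_row (x : Fin 4 → R) : Function.update ![y, u, v, w] 3 x = ![y, u, v, x] := by
    ext a
    fin_cases a <;> rfl
  simp only [det_of_eq_sum_mul_det_update_single ![y, u, v, w] 3, update_row]
  rfl

theorem det_vec4_single_perm [CharP R 2] (σ : Equiv.Perm (Fin 4)) (v : Fin 4 → R) :
    det (of ![Pi.single (σ 0) 1, Pi.single (σ 1) 1, v, Pi.single (σ 3) 1]) = v (σ 2) := by
  have hrows : of ![Pi.single (σ 0) 1, Pi.single (σ 1) 1, v, Pi.single (σ 3) 1] =
      ((1 : Matrix (Fin 4) (Fin 4) R).submatrix σ id).updateRow 2 v := by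
    ext a b
    fin_cases a <;> simp [updateRow_apply, one_apply, Pi.single_apply, eq_comm]
  rw [hrows, det_updateRow_submatrix_one]
  rcases Int.units_eq_one_or (Equiv.Perm.sign σ) with h | h <;> simp [h, CharTwo.neg_eq]

end Determinants

section CubicForm

variable {k : Type*} [Field k]

theorem tripleCoeffVec_perm (F : MvPolynomial (Fin 4) k) (σ : Equiv.Perm (Fin 4)) (a : Fin 4) :
    tripleCoeffVec F (σ a) = coeff (∑ j ∈ Finset.univ.erase a, Finsupp.single (σ j) 1) F := by
  rw [tripleCoeffVec]
  congr 1
  exact (Finset.sum_equiv σ (by simp) (by simp)).symm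

variable [CharP k 2]

theorem coeff_single_pderiv_pderiv_eq_det (F : MvPolynomial (Fin 4) k) (l i j : Fin 4) :
    coeff (Finsupp.single l 1) (pderiv i (pderiv j F)) =
      det (of ![Pi.single l 1, Pi.single i 1, tripleCoeffVec F, Pi.single j 1]) := by
  by_cases h : l = i ∨ l = j ∨ i = j
  · rw [coeff_single_pderiv_pderiv_eq_zero F h]
    rcases h with rfl | rfl | rfl
    · exact (det_zero_of_row_eq (i := 0) (j := 1) (by decide) rfl).symm
    · exact (det_zero_of_row_eq (i := 0) (j := 3) (by decide) rfl).symm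
    · exact (det_zero_of_row_eq (i := 1) (j := 3) (by decide) rfl).symm
  · push Not at h
    obtain ⟨hli, hlj, hij⟩ := h
    have hinj : Function.Injective ![l, i, j] := by
      simp [Function.Injective, Fin.forall_fin_succ, hli, hlj, hij, hli.symm, hlj.symm, hij.symm]
    obtain ⟨σ, hσ⟩ : ∃ σ : Equiv.Perm (Fin 4), ∀ a, σ (![0, 1, 3] a) = ![l, i, j] a :=
      Equiv.Perm.exists_extending_pair _ _ (by decide) hinj
    obtain rfl : σ 0 = l := hσ 0
    obtain rfl : σ 1 = i := hσ 1
    obtain rfl : σ 3 = j := hσ 2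
    rw [coeff_single_pderiv_pderiv_of_ne F hli hlj hij, det_vec4_single_perm, tripleCoeffVec_perm,
      show Finset.univ.erase (2 : Fin 4) = {0, 1, 3} from rfl]
    simp [add_assoc]

variable {F : MvPolynomial (Fin 4) k} (hF : F.IsHomogeneous 3)
include hF

theorem pderiv_pderiv_eq_sum_det (i j : Fin 4) :
    pderiv i (pderiv j F) =
      ∑ l, C (det (of ![Pi.single l 1, Pi.single i 1, tripleCoeffVec F, Pi.single j 1])) * X l := by
  rw [eq_sum_C_coeff_mul_X_of_isHomogeneous_one (hF.pderiv.pderiv (i := i) (n := 2))]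
  simp only [coeff_single_pderiv_pderiv_eq_det]

theorem sum_C_mul_pderiv_pderiv_eq_sum_det (w : Fin 4 → k) (i : Fin 4) :
    ∑ j, C (w j) * pderiv i (pderiv j F) =
      ∑ l, C (det (of ![Pi.single l 1, Pi.single i 1, tripleCoeffVec F, w])) * X l := by
  simp only [pderiv_pderiv_eq_sum_det hF, det_vec4_eq_sum_last _ _ _ w, map_sum, C_mul,
    Finset.mul_sum, Finset.sum_mul, mul_assoc]
  exact Finset.sum_comm

theorem dotProduct_hessianAt_mulVec (y u w : Fin 4 → k) :
    u ⬝ᵥ hessianAt F y *ᵥ w = det (of ![y, u, tripleCoeffVec F, w]) := by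
  have mulVec_apply (i : Fin 4) :
      (hessianAt F y *ᵥ w) i = det (of ![y, Pi.single i 1, tripleCoeffVec F, w]) := calc
    (hessianAt F y *ᵥ w) i = eval y (∑ j, C (w j) * pderiv i (pderiv j F)) := by
      simp [hessianAt, mulVec, dotProduct, mul_comm]
    _ = ∑ l, y l * det (of ![Pi.single l 1, Pi.single i 1, tripleCoeffVec F, w]) := by
      simp [sum_C_mul_pderiv_pderiv_eq_sum_det hF, mul_comm]
    _ = det (of ![y, Pi.single i 1, tripleCoeffVec F, w]) := (det_vec4_eq_sum_fst y _ _ w).symm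
  simp only [dotProduct, mulVec_apply, ← det_vec4_eq_sum_snd]

theorem hessianAt_mulVec_tripleCoeffVec (y : Fin 4 → k) :
    hessianAt F y *ᵥ tripleCoeffVec F = 0 := by
  refine dotProduct_eq_zero _ fun u ↦ ?_
  rw [dotProduct_comm, dotProduct_hessianAt_mulVec hF]
  exact det_zero_of_row_eq (i := 2) (j := 3) (by decide) rfl

theorem pderiv_polar_eq_zero (i : Fin 4) :
    pderiv i (∑ j, C (tripleCoeffVec F j) * pderiv j F) = 0 := by
  simp only [map_sum, pderiv_C_mul, sum_C_mul_pderiv_pderiv_eq_sum_det hF]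
  refine Finset.sum_eq_zero fun l _ ↦ ?_
  rw [det_zero_of_row_eq (i := 2) (j := 3) (by decide) rfl, C_0, zero_mul]

theorem exists_polar_eq_sq [PerfectRing k 2] :
    ∃ L : MvPolynomial (Fin 4) k, L.IsHomogeneous 1 ∧
      ∑ i, C (tripleCoeffVec F i) * pderiv i F = L ^ 2 :=
  exists_isHomogeneous_pow_eq_of_pderiv_eq_zero
    (IsHomogeneous.sum _ _ _ fun _ _ ↦ hF.pderiv.C_mul _) (pderiv_polar_eq_zero hF)

theorem tripleCoeffVec_ne_zero (hne : ¬ ∀ i j : Fin 4, pderiv i (pderiv j F) = 0) :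
    tripleCoeffVec F ≠ 0 := by
  refine fun hv ↦ hne fun i j ↦ ?_
  rw [pderiv_pderiv_eq_sum_det hF]
  refine Finset.sum_eq_zero fun l _ ↦ ?_
  rw [hv, det_eq_zero_of_row_eq_zero 2 fun _ ↦ rfl, C_0, zero_mul]

theorem exists_eq_smul_tripleCoeffVec (hv : tripleCoeffVec F ≠ 0) {w : Fin 4 → k}
    (hw : ∀ y, hessianAt F y *ᵥ w = 0) : ∃ c : k, w = c • tripleCoeffVec F := by
  by_contra! h
  have hind : LinearIndependent k ![tripleCoeffVec F, w] :=
    (LinearIndependent.pair_iff' hv).mpr fun c ↦ (h c).symm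
  obtain ⟨y, u, hdet⟩ := exists_det_vec4_ne_zero_of_linearIndependent hind
  rw [← dotProduct_hessianAt_mulVec hF, hw, dotProduct_zero] at hdet
  exact hdet rfl

end CubicForm

theorem stmt8_general {k : Type*} [Field k] [PerfectField k] [CharP k 2]
    (F : MvPolynomial (Fin 4) k) (hhom : F.IsHomogeneous 3) :
    (∀ y : Fin 4 → k, (hessianAt F y).mulVec (tripleCoeffVec F) = 0) ∧
    (∃ L : MvPolynomial (Fin 4) k, L.IsHomogeneous 1 ∧
      (∑ i, C (tripleCoeffVec F i) * pderiv i F) = L ^ 2) ∧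
    ((¬ ∀ i j : Fin 4, pderiv i (pderiv j F) = 0) →
      ∀ w : Fin 4 → k, (∀ y : Fin 4 → k, (hessianAt F y).mulVec w = 0) →
        ∃ c : k, w = c • tripleCoeffVec F) :=
  ⟨hessianAt_mulVec_tripleCoeffVec hhom, exists_polar_eq_sq hhom, fun hne _ hw ↦
    exists_eq_smul_tripleCoeffVec hhom (tripleCoeffVec_ne_zero hhom hne) hw⟩

/-- For a cubic form `F` in characteristic 2 with
`v = (a₁₂₃, a₀₂₃, a₀₁₃, a₀₁₂)`:
(i) `H(F)(y)·v = 0` for every `y`;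
(ii) the polar `Σᵢ vᵢ ∂F/∂xᵢ` is the square of a homogeneous linear form;
(iii) if the Hessian matrix is not identically zero, then `v` is the unique
such vector up to scalar. -/
theorem stmt8 {k : Type*} [Field k] [IsAlgClosed k] (hchar : ringChar k = 2)
    (F : MvPolynomial (Fin 4) k) (hhom : F.IsHomogeneous 3) :
    (∀ y : Fin 4 → k, (hessianAt F y).mulVec (tripleCoeffVec F) = 0) ∧
    (∃ L : MvPolynomial (Fin 4) k, L.IsHomogeneous 1 ∧
      (∑ i, C (tripleCoeffVec F i) * pderiv i F) = L ^ 2) ∧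
    ((¬ ∀ i j : Fin 4, pderiv i (pderiv j F) = 0) →
      ∀ w : Fin 4 → k, (∀ y : Fin 4 → k, (hessianAt F y).mulVec w = 0) →
        ∃ c : k, w = c • tripleCoeffVec F) := by
  have : CharP k 2 := ringChar.of_eq hchar
  exact stmt8_general F hhom
end
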